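/- arXiv:2311.08044 — 2 statements merged into one kernel-verified Lean document; each statement's English description precedes it below -/
import Mathlib

section
/- Let A be an abelian category with arbitrary coproducts and products such that coproducts and products of exact sequences are exact, and let F : D(A) → D(A) be a bi-continuous triangle endofunctor (preserving arbitrary coproducts and products). Assume that F sends each object of A (viewed as a stalk complex concentrated in degree zero) to an object of A and that the restriction F|_A is isomorphic to the identity functor of A. If either (1) A has enough projective objects or enough injective objects and A has finite global dimension, or (2) F is a triangle autoequivalence, then F is isomorphic, as a triangle functor, to a pseudo-identity on D(A) with respect to the canonical pre-weight structure. -/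
/-!
Fix an isomorphism `η` between the restriction of `F` to the stalk complexes in degree zero and the
inclusion of those stalks. The argument has three steps.

*Objectwise, `F X ≅ X`.* By `η`, every object `Z` concentrated in a single degree `m` has a
canonical isomorphism `F Z ≅ Z` (`Good`), compatible with all maps between objects in the same
degree (`Good.cp₀`) and with the connecting maps `Z ⟶ Z'⟦1⟧`, `Z` in degree `m` and `Z'` in degree
`m + 1` (`Good.cp`). A complex is assembled from its terms by brutal truncations. At each step one
stalk is attached along a connecting map; by the vanishing of maps from `D^{≤ m}` to `D^{> m}`,
compatibility of that map with the isomorphisms already built is tested on one neighbouring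
stalk (`cp_of_comp_right`, `cp_of_comp_left`), so that the isomorphism extends. Homotopy colimits
then give all truncations `br (· ≤ b) K` (`br_iso_le`), and homotopy limits give all complexes
(`br_iso`, `nonempty_iso`).

*`F` is fully faithful.* For stalks this is an induction on the degree `n` of the extension: a class
in `Ext^{n+1}(M, N)` dies on some epimorphism `M' ⟶ M`, so it factors through the class in
`Ext^1(M, K)` of the kernel `K` of that epimorphism (`exists_epi_comp_eq_zero`, `ff_single_shift`).
The general case is a dévissage along triangles, homotopy limits in the target
(`induction_holim`) and homotopy colimits in the source (`induction_hocolim`). Being essentially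
surjective by the first step, `F` is an equivalence (`isEquivalence`).

*Transport.* Choose isomorphisms `φ X : F X ≅ X` for all `X`, the canonical ones whenever `X` lies
in the core (`exists_core_iso`). The functor `X ↦ X`, `f ↦ (φ X)⁻¹ ≫ F f ≫ φ Y` is isomorphic to
`F`, is the identity on objects, and is the identity on the core.

Both (co)limit arguments rest on exactness of countable (co)products in the abelian category:
homology commutes with them, so the localization functor `Q` preserves them
(`nonempty_isColimit_Q`, `nonempty_isLimit_Q`), and a complex is the homotopy (co)limit of a sequence
of truncations that is eventually constant in every degree (`isHocolim_Q`, `isHolim_Q`), because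
the telescope sequence is then degreewise split. As `F` is triangulated and preserves countable
(co)products, it preserves these homotopy (co)limits.
-/

open CategoryTheory Category Limits Pretriangulated ZeroObject

universe v u

variable {T : Type u} [Category.{v} T] [HasZeroObject T] [HasShift T ℤ] [Preadditive T]
  [∀ n : ℤ, (CategoryTheory.shiftFunctor T n).Additive] [Pretriangulated T]

/-- `Z ∈ star X Y` iff there is a distinguished triangle `A → Z → B → A⟦1⟧`
with `A ∈ X` and `B ∈ Y`. -/
def star (X Y : Set T) : Set T :=
  {Z | ∃ (A B : T) (f : A ⟶ Z) (g : Z ⟶ B) (h : B ⟶ A⟦(1:ℤ)⟧),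
    A ∈ X ∧ B ∈ Y ∧ Triangle.mk f g h ∈ distTriang T}

/-- The cone of `f` lies in `S`. -/
def coneIn {A B : T} (f : A ⟶ B) (S : Set T) : Prop :=
  ∃ (Z : T) (g : B ⟶ Z) (h : Z ⟶ A⟦(1:ℤ)⟧),
    Triangle.mk f g h ∈ (distTriang T) ∧ Z ∈ S

/-- `U≥m = Σ^{-m}(U≥0)`. -/
def geM (ge : Set T) (m : ℤ) : Set T := {X | X⟦m⟧ ∈ ge}

/-- `U≤m = Σ^{-m}(U≤0)`. -/
def leM (le : Set T) (m : ℤ) : Set T := {X | X⟦m⟧ ∈ le}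

/-- `U[m,n] = U≥m ∩ U≤n`. -/
def interval (ge le : Set T) (m n : ℤ) : Set T := geM ge m ∩ leM le n

/-- The core `C = U≥0 ∩ U≤0`. -/
def coreSet (ge le : Set T) : Set T := ge ∩ le

/-- `Σ^{-k}(C)`. -/
def coreShift (ge le : Set T) (k : ℤ) : Set T := {X | X⟦k⟧ ∈ coreSet ge le}

/-- `U₊ = ⋂ₘ U≥m`. -/
def plusSet (ge : Set T) : Set T := {X | ∀ m : ℤ, X ∈ geM ge m}

/-- `U₋ = ⋂ₘ U≤m`. -/
def minusSet (le : Set T) : Set T := {X | ∀ m : ℤ, X ∈ leM le m}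

/-- `U_b = ⋃_{m ≤ n} U[m,n]`. -/
def boundedSet (ge le : Set T) : Set T :=
  {X | ∃ m n : ℤ, m ≤ n ∧ X ∈ interval ge le m n}

/-- A pre-weight structure: a pair of full additive subcategories (given by their
classes of objects, closed under isomorphisms, containing the zero objects and closed
under finite biproducts) with `U≥0 ∗ Σ(U≤0) = T`, `U≥0` closed under `Σ⁻¹` and
extensions, and `U≤0` closed under `Σ` and extensions. -/
structure IsPreWeightStructure (ge le : Set T) : Prop where
  ge_iso : ∀ ⦃X Y : T⦄, (X ≅ Y) → X ∈ ge → Y ∈ ge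
  le_iso : ∀ ⦃X Y : T⦄, (X ≅ Y) → X ∈ le → Y ∈ le
  ge_zero : ∀ Z : T, IsZero Z → Z ∈ ge
  le_zero : ∀ Z : T, IsZero Z → Z ∈ le
  ge_biprod : ∀ ⦃X Y : T⦄ (b : BinaryBicone X Y), b.IsBilimit → X ∈ ge → Y ∈ ge → b.pt ∈ ge
  le_biprod : ∀ ⦃X Y : T⦄ (b : BinaryBicone X Y), b.IsBilimit → X ∈ le → Y ∈ le → b.pt ∈ le
  decomp : ∀ Z : T, Z ∈ star ge (leM le (-1))
  ge_shiftNeg : ∀ X ∈ ge, X⟦(-1:ℤ)⟧ ∈ ge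
  ge_ext : star ge ge ⊆ ge
  le_shiftPos : ∀ X ∈ le, X⟦(1:ℤ)⟧ ∈ le
  le_ext : star le le ⊆ le

/-- A pseudo-identity with respect to the pre-weight structure `(ge, le)`: an
autoequivalence which fixes every object on the nose and restricts to the identity
functor on the core.  (That it is moreover a triangle functor is imposed separately.) -/
structure IsPseudoIdentity (ge le : Set T) (F : T ⥤ T) : Prop where
  isEquivalence : F.IsEquivalence
  obj_eq : ∀ X : T, F.obj X = X
  map_core : ∀ (X Y : T), X ∈ coreSet ge le → Y ∈ coreSet ge le → ∀ f : X ⟶ Y,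
    F.map f = eqToHom (obj_eq X) ≫ f ≫ eqToHom (obj_eq Y).symm

universe w v₂ u₂

variable (A : Type u₂) [Category.{v₂} A] [Abelian A] [HasDerivedCategory.{w} A]

/-- `D≥0`: objects of the derived category isomorphic to a complex concentrated in
non-negative degrees. -/
def Dge : Set (DerivedCategory A) :=
  {X | ∃ K : CochainComplex A ℤ, (∀ n : ℤ, n < 0 → IsZero (K.X n)) ∧
    Nonempty (X ≅ DerivedCategory.Q.obj K)}

/-- `D≤0`: objects of the derived category isomorphic to a complex concentrated in
non-positive degrees. -/
def Dle : Set (DerivedCategory A) :=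
  {X | ∃ K : CochainComplex A ℤ, (∀ n : ℤ, 0 < n → IsZero (K.X n)) ∧
    Nonempty (X ≅ DerivedCategory.Q.obj K)}

namespace PseudoId

/-! ### Distinguished triangles -/

section Tri
variable {T : Type u} [Category.{v} T] [HasZeroObject T] [HasShift T ℤ] [Preadditive T]
  [∀ n : ℤ, (shiftFunctor T n).Additive] [Pretriangulated T]
  {X Y Z : T} {f : X ⟶ Y} {g : Y ⟶ Z} {h : Z ⟶ X⟦(1 : ℤ)⟧}

lemma dist_lift (hT : Triangle.mk f g h ∈ distTriang T) {W : T} (x : W ⟶ Y) (hx : x ≫ g = 0) :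
    ∃ l : W ⟶ X, l ≫ f = x := by
  obtain ⟨l, hl⟩ := Triangle.coyoneda_exact₂ _ hT x hx
  exact ⟨l, hl.symm⟩

lemma dist_desc (hT : Triangle.mk f g h ∈ distTriang T) {W : T} (x : Y ⟶ W) (hx : f ≫ x = 0) :
    ∃ l : Z ⟶ W, g ≫ l = x := by
  obtain ⟨l, hl⟩ := Triangle.yoneda_exact₂ _ hT x hx
  exact ⟨l, hl.symm⟩

lemma dist_lift₃ (hT : Triangle.mk f g h ∈ distTriang T) {W : T} (x : W ⟶ Z) (hx : x ≫ h = 0) :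
    ∃ l : W ⟶ Y, l ≫ g = x := by
  obtain ⟨l, hl⟩ := Triangle.coyoneda_exact₃ _ hT x hx
  exact ⟨l, hl.symm⟩

lemma dist_desc₃ (hT : Triangle.mk f g h ∈ distTriang T) {W : T} (x : Z ⟶ W) (hx : g ≫ x = 0) :
    ∃ l : X⟦(1 : ℤ)⟧ ⟶ W, h ≫ l = x := by
  obtain ⟨l, hl⟩ := Triangle.yoneda_exact₃ _ hT x hx
  exact ⟨l, hl.symm⟩

lemma dist_lift₁ (hT : Triangle.mk f g h ∈ distTriang T) {W : T} (x : W ⟶ X⟦(1 : ℤ)⟧)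
    (hx : x ≫ f⟦(1 : ℤ)⟧' = 0) : ∃ l : W ⟶ Z, l ≫ h = x := by
  obtain ⟨l, hl⟩ := Triangle.coyoneda_exact₁ _ hT x hx
  exact ⟨l, hl.symm⟩

lemma dist_zero₁₂ (hT : Triangle.mk f g h ∈ distTriang T) : f ≫ g = 0 :=
  comp_distTriang_mor_zero₁₂ _ hT

lemma dist_zero₂₃ (hT : Triangle.mk f g h ∈ distTriang T) : g ≫ h = 0 :=
  comp_distTriang_mor_zero₂₃ _ hT

lemma dist_zero₃₁ (hT : Triangle.mk f g h ∈ distTriang T) : h ≫ f⟦(1 : ℤ)⟧' = 0 :=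
  comp_distTriang_mor_zero₃₁ _ hT

variable {X' Y' Z' : T} {f' : X' ⟶ Y'} {g' : Y' ⟶ Z'} {h' : Z' ⟶ X'⟦(1 : ℤ)⟧}

/-- A square between the first maps of two triangles whose vertical maps are isomorphisms
extends to an isomorphism of triangles. -/
lemma dist_iso₃ (hT : Triangle.mk f g h ∈ distTriang T) (hT' : Triangle.mk f' g' h' ∈ distTriang T)
    (a : X ≅ X') (b : Y ≅ Y') (hab : f ≫ b.hom = a.hom ≫ f') :
    ∃ c : Z ≅ Z', g ≫ c.hom = b.hom ≫ g' ∧ h ≫ a.hom⟦(1 : ℤ)⟧' = c.hom ≫ h' := by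
  obtain ⟨c, h₁, h₂⟩ := complete_distinguished_triangle_morphism _ _ hT hT' a.hom b.hom hab
  have : IsIso (Triangle.homMk (Triangle.mk f g h) (Triangle.mk f' g' h') a.hom b.hom c
    hab h₁ h₂).hom₃ := isIso₃_of_isIso₁₂ _ hT hT'
      (inferInstanceAs (IsIso a.hom)) (inferInstanceAs (IsIso b.hom))
  exact ⟨@asIso T _ Z Z' c this, h₁, h₂⟩

lemma dist_iso₁ (hT : Triangle.mk f g h ∈ distTriang T) (hT' : Triangle.mk f' g' h' ∈ distTriang T)
    (b : Y ≅ Y') (c : Z ≅ Z') (hbc : g ≫ c.hom = b.hom ≫ g') :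
    ∃ a : X ≅ X', f ≫ b.hom = a.hom ≫ f' ∧ h ≫ a.hom⟦(1 : ℤ)⟧' = c.hom ≫ h' := by
  obtain ⟨a, h₁, h₂⟩ := complete_distinguished_triangle_morphism₁ _ _ hT hT' b.hom c.hom hbc
  have : IsIso (Triangle.homMk (Triangle.mk f g h) (Triangle.mk f' g' h') a b.hom c.hom
    h₁ hbc h₂).hom₁ := isIso₁_of_isIso₂₃ _ hT hT'
      (inferInstanceAs (IsIso b.hom)) (inferInstanceAs (IsIso c.hom))
  exact ⟨@asIso T _ X X' a this, h₁, h₂⟩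

lemma dist_iso₂ (hT : Triangle.mk f g h ∈ distTriang T) (hT' : Triangle.mk f' g' h' ∈ distTriang T)
    (a : X ≅ X') (c : Z ≅ Z') (hac : h ≫ a.hom⟦(1 : ℤ)⟧' = c.hom ≫ h') :
    ∃ b : Y ≅ Y', f ≫ b.hom = a.hom ≫ f' ∧ g ≫ c.hom = b.hom ≫ g' := by
  obtain ⟨b, h₁, h₂⟩ := complete_distinguished_triangle_morphism₂ _ _ hT hT' a.hom c.hom hac
  have : IsIso (Triangle.homMk (Triangle.mk f g h) (Triangle.mk f' g' h') a.hom b c.hom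
    h₁ h₂ hac).hom₂ := isIso₂_of_isIso₁₃ _ hT hT'
      (inferInstanceAs (IsIso a.hom)) (inferInstanceAs (IsIso c.hom))
  exact ⟨@asIso T _ Y Y' b this, h₁, h₂⟩
end Tri

/-! ### Telescopes of eventually constant sequences -/

section Tel
variable {C : Type u} [Category.{v} C] [Preadditive C]

/-- A solution `r` of the recursion `r n = ι n + t n ≫ r (n + 1)` of the formal series
`ι n + t n ≫ ι (n + 1) + ⋯`, normalised by `r N = 0`; it exists because the recursion can be run
backwards from `N`, and forwards as well since `t n` is invertible for `n ≥ N`. -/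
lemma exists_partialSums (Y : ℕ → C) (t : ∀ n, Y n ⟶ Y (n + 1)) (N : ℕ)
    (ht : ∀ n, N ≤ n → IsIso (t n)) {P : C} (ι : ∀ n, Y n ⟶ P) :
    ∃ r : ∀ n, Y n ⟶ P, r N = 0 ∧ ∀ n, r n = ι n + t n ≫ r (n + 1) := by
  induction N generalizing Y with
  | zero =>
    have (n : ℕ) : IsIso (t n) := ht n (Nat.zero_le n)
    refine ⟨fun n => Nat.rec (motive := fun n => Y n ⟶ P) 0
      (fun n x => inv (t n) ≫ (x - ι n)) n, rfl, fun n => by simp⟩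
  | succ N ih =>
    obtain ⟨r, h0, hr⟩ := ih (fun n => Y (n + 1)) (fun n => t (n + 1))
      (fun n hn => ht (n + 1) (by lia)) (fun n => ι (n + 1))
    exact ⟨fun n => Nat.casesOn (motive := fun n => Y n ⟶ P) n (ι 0 + t 0 ≫ r 0) r, h0,
      fun n => by cases n with
        | zero => rfl
        | succ n => exact hr n⟩

/-- If the maps `j n : Y n ⟶ X` are eventually invertible, the telescope sequence
`∐ Y ⟶ ∐ Y ⟶ X` (first map: identity minus shift) is split short exact. The retraction is given by
the partial sums of `exists_partialSums`, the section by the inverse of `j N`. -/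
lemma telescope_splitting (Y : ℕ → C) (t : ∀ n, Y n ⟶ Y (n + 1)) {X : C} (j : ∀ n, Y n ⟶ X)
    (hj : ∀ n, t n ≫ j (n + 1) = j n) (N : ℕ) (hN : ∀ n, N ≤ n → IsIso (j n))
    {P : C} (ι : ∀ n, Y n ⟶ P) (hP : IsColimit (Cofan.mk P ι))
    (f : P ⟶ P) (g : P ⟶ X) (hf : ∀ n, ι n ≫ f = ι n - t n ≫ ι (n + 1))
    (hg : ∀ n, ι n ≫ g = j n) (zero : f ≫ g = 0) :
    Nonempty (ShortComplex.mk f g zero).Splitting := by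
  have hext {Z : C} {a b : P ⟶ Z} (h : ∀ n, ι n ≫ a = ι n ≫ b) : a = b :=
    hP.hom_ext (fun ⟨n⟩ => h n)
  have ht (n : ℕ) (hn : N ≤ n) : IsIso (t n) := by
    have := hN n hn
    have := hN (n + 1) (by lia)
    have : IsIso (t n ≫ j (n + 1)) := by rw [hj]; infer_instance
    exact IsIso.of_isIso_comp_right (t n) (j (n + 1))
  obtain ⟨r, hr0, hr⟩ := exists_partialSums Y t N ht ι
  have := hN N le_rfl
  let R : P ⟶ P := hP.desc (Cofan.mk _ r)
  have hR (n : ℕ) : ι n ≫ R = r n := hP.fac (Cofan.mk _ r) ⟨n⟩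
  let σ := inv (j N) ≫ ι N
  have key (n : ℕ) : r n ≫ f = ι n - j n ≫ σ := by
    have step (n : ℕ) : r n ≫ f - (ι n - j n ≫ σ) =
        t n ≫ (r (n + 1) ≫ f - (ι (n + 1) - j (n + 1) ≫ σ)) := by
      rw [hr n, ← hj n, Preadditive.add_comp, hf]
      simp only [assoc, Preadditive.comp_sub]
      abel
    have hN0 : r N ≫ f - (ι N - j N ≫ σ) = 0 := by simp [hr0, σ]
    rw [← sub_eq_zero]
    rcases le_total n N with h | h
    · induction h using Nat.decreasingInduction with
      | self => exact hN0
      | of_succ k hk ih => rw [step, ih, comp_zero]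
    · induction n, h using Nat.le_induction with
      | base => exact hN0
      | succ k hk ih =>
        have := ht k hk
        rw [step] at ih
        rw [← cancel_epi (t k), ih, comp_zero]
  refine ⟨{ r := R, s := σ, f_r := hext fun n => ?_, s_g := by simp [σ, hg], id := hext fun n => ?_ }⟩
  · dsimp
    rw [← assoc, hf, Preadditive.sub_comp, assoc, hR, hR, hr n]
    simp
  · dsimp
    rw [Preadditive.comp_add, ← assoc, hR, key, ← assoc (ι n) g, hg]
    simp

/-- The dual of `telescope_splitting`, for products and inverse sequences. -/
lemma cotelescope_splitting (Y : ℕ → C) (t : ∀ n, Y (n + 1) ⟶ Y n) {X : C} (j : ∀ n, X ⟶ Y n)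
    (hj : ∀ n, j (n + 1) ≫ t n = j n) (N : ℕ) (hN : ∀ n, N ≤ n → IsIso (j n))
    {P : C} (π : ∀ n, P ⟶ Y n) (hP : IsLimit (Fan.mk P π))
    (f : P ⟶ P) (g : X ⟶ P) (hf : ∀ n, f ≫ π n = π n - π (n + 1) ≫ t n)
    (hg : ∀ n, g ≫ π n = j n) (zero : g ≫ f = 0) :
    Nonempty (ShortComplex.mk g f zero).Splitting := by
  obtain ⟨s⟩ := telescope_splitting (fun n => Opposite.op (Y n)) (fun n => (t n).op)
    (fun n => (j n).op) (fun n => by rw [← op_comp, hj]) N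
    (fun n hn => by have := hN n hn; infer_instance) (fun n => (π n).op)
    (Fan.IsLimit.op hP) f.op g.op (fun n => by rw [← op_comp, hf]; rfl)
    (fun n => by rw [← op_comp, hg]) (by rw [← op_comp, zero, op_zero])
  exact ⟨s.unop⟩
end Tel

/-! ### Homology and countable (co)products -/

section Homology
variable (C : Type u) [Category.{v} C]

variable {C} in
lemma nonempty_isColimit_cofan {X : ℕ → C} {P : C} (ι : ∀ n, X n ⟶ P)
    (hex : ∀ (W : C) (w : ∀ n, X n ⟶ W), ∃ h : P ⟶ W, ∀ n, ι n ≫ h = w n)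
    (huniq : ∀ (W : C) (h h' : P ⟶ W), (∀ n, ι n ≫ h = ι n ≫ h') → h = h') :
    Nonempty (IsColimit (Cofan.mk P ι)) :=
  ⟨Cofan.IsColimit.mk _ (fun t => (hex _ t.inj).choose) (fun t => (hex _ t.inj).choose_spec)
    (fun t _ hh => huniq _ _ _ (fun n => (hh n).trans ((hex _ t.inj).choose_spec n).symm))⟩

variable {C} in
lemma nonempty_isLimit_fan {X : ℕ → C} {P : C} (π : ∀ n, P ⟶ X n)
    (hex : ∀ (W : C) (w : ∀ n, W ⟶ X n), ∃ h : W ⟶ P, ∀ n, h ≫ π n = w n)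
    (huniq : ∀ (W : C) (h h' : W ⟶ P), (∀ n, h ≫ π n = h' ≫ π n) → h = h') :
    Nonempty (IsLimit (Fan.mk P π)) :=
  ⟨Fan.IsLimit.mk _ (fun t => (hex _ t.proj).choose) (fun t => (hex _ t.proj).choose_spec)
    (fun t _ hh => huniq _ _ _ (fun n => (hh n).trans ((hex _ t.proj).choose_spec n).symm))⟩

/-- Countable coproducts of monomorphisms are monomorphisms. -/
def CoprodMono : Prop :=
  ∀ (X Y : ℕ → C) (f : ∀ n, X n ⟶ Y n), (∀ n, Mono (f n)) → ∀ (P R : C)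
    (a : ∀ n, X n ⟶ P) (b : ∀ n, Y n ⟶ R), IsColimit (Cofan.mk P a) →
    IsColimit (Cofan.mk R b) → ∀ g : P ⟶ R, (∀ n, a n ≫ g = f n ≫ b n) → Mono g

variable {C} [Abelian C]

/-- Homology of short complexes commutes with countable coproducts, when these preserve
monomorphisms. -/
lemma nonempty_isColimit_homology (hC : CoprodMono C) [HasColimitsOfShape (Discrete ℕ) C]
    (S : ℕ → ShortComplex C) (T : ShortComplex C) (ι : ∀ n, S n ⟶ T)
    (h₁ : IsColimit (Cofan.mk T.X₁ (fun n => (ι n).τ₁)))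
    (h₂ : IsColimit (Cofan.mk T.X₂ (fun n => (ι n).τ₂)))
    (h₃ : IsColimit (Cofan.mk T.X₃ (fun n => (ι n).τ₃))) :
    Nonempty (IsColimit (Cofan.mk T.homology (fun n => ShortComplex.homologyMap (ι n)))) := by
  let Z := ∐ (fun n => (S n).cycles)
  let m : Z ⟶ T.X₂ := Sigma.desc (fun n => (S n).iCycles ≫ (ι n).τ₂)
  have hιm (n : ℕ) : Sigma.ι (fun n => (S n).cycles) n ≫ m = (S n).iCycles ≫ (ι n).τ₂ := by
    simp [m]
  have hm : Mono m := hC _ _ (fun n => (S n).iCycles) (fun _ => inferInstance) _ _ _ _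
    (coproductIsCoproduct _) h₂ m hιm
  let B := fun n => cokernel (S n).iCycles
  let bq (n : ℕ) : B n ⟶ (S n).X₃ := cokernel.desc _ (S n).g (by simp)
  have hbq (n : ℕ) : Mono (bq n) :=
    (ShortComplex.exact_of_f_is_kernel (ShortComplex.mk (S n).iCycles (S n).g (by simp))
      (S n).cyclesIsKernel).mono_cokernelDesc
  let p : T.X₂ ⟶ ∐ B := Cofan.IsColimit.desc h₂
    (fun n => cokernel.π (S n).iCycles ≫ Sigma.ι B n)
  have hp (n : ℕ) : (ι n).τ₂ ≫ p = cokernel.π (S n).iCycles ≫ Sigma.ι B n :=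
    Cofan.IsColimit.fac h₂ _ n
  let q : ∐ B ⟶ T.X₃ := Sigma.desc (fun n => bq n ≫ (ι n).τ₃)
  have hιq (n : ℕ) : Sigma.ι B n ≫ q = bq n ≫ (ι n).τ₃ := by simp [q]
  have hq : Mono q := hC _ _ bq hbq _ _ _ _ (coproductIsCoproduct _) h₃ q hιq
  have hpq : p ≫ q = T.g := Cofan.IsColimit.hom_ext h₂ _ _ (fun n => by
    change (ι n).τ₂ ≫ _ = (ι n).τ₂ ≫ _
    rw [← assoc, hp, assoc, hιq]
    simp [bq, (ι n).comm₂₃])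
  have hmp : m ≫ p = 0 := Sigma.hom_ext _ _ (fun n => by
    rw [← assoc, hιm, assoc, hp]
    simp)
  have hex : (ShortComplex.mk m p hmp).Exact := by
    apply ShortComplex.exact_of_g_is_cokernel
    have hu : ∀ {W : C} (x : T.X₂ ⟶ W) (hx : m ≫ x = 0), ∀ n, (S n).iCycles ≫ (ι n).τ₂ ≫ x = 0 :=
      fun x hx n => by rw [← assoc, ← hιm, assoc, hx, comp_zero]
    refine CokernelCofork.IsColimit.ofπ _ _
      (fun x hx => Sigma.desc (fun n => cokernel.desc _ ((ι n).τ₂ ≫ x) (hu x hx n)))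
      (fun x hx => Cofan.IsColimit.hom_ext h₂ _ _ (fun n => ?_))
      (fun x hx y hy => Sigma.hom_ext _ _ (fun n => ?_))
    · change (ι n).τ₂ ≫ _ = (ι n).τ₂ ≫ _
      rw [← assoc, hp]
      simp
    · rw [← cancel_epi (cokernel.π (S n).iCycles), ← assoc, ← hp, assoc, hy]
      simp
  have : Mono (ShortComplex.mk m p hmp).f := hm
  -- the coproduct of the cycles is the object of cycles
  have hk : T.iCycles ≫ p = 0 := by rw [← cancel_mono q, assoc, hpq]; simp
  let k : T.cycles ⟶ Z := hex.lift T.iCycles hk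
  have hkm : k ≫ m = T.iCycles := hex.lift_f _ _
  have hcyc (n : ℕ) : ShortComplex.cyclesMap (ι n) ≫ k = Sigma.ι (fun n => (S n).cycles) n := by
    rw [← cancel_mono m, assoc, hkm, hιm]
    simp
  let l : Z ⟶ T.cycles := Sigma.desc (fun n => ShortComplex.cyclesMap (ι n))
  have hkl : k ≫ l = 𝟙 _ := by
    have : l ≫ T.iCycles = m := Sigma.hom_ext _ _ (fun n => by simp [l, hιm])
    rw [← cancel_mono T.iCycles, assoc, this, hkm, id_comp]
  have hcext {W : C} {x y : T.cycles ⟶ W}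
      (h : ∀ n, ShortComplex.cyclesMap (ι n) ≫ x = ShortComplex.cyclesMap (ι n) ≫ y) : x = y := by
    rw [← id_comp x, ← id_comp y, ← hkl, assoc, assoc]
    congr 1
    exact Sigma.hom_ext _ _ (fun n => by simpa [l] using h n)
  refine nonempty_isColimit_cofan _ (fun W w => ?_) (fun W x y hxy => ?_)
  · let z : T.cycles ⟶ W := k ≫ Sigma.desc (fun n => (S n).homologyπ ≫ w n)
    have hz (n : ℕ) : ShortComplex.cyclesMap (ι n) ≫ z = (S n).homologyπ ≫ w n := by
      rw [← assoc, hcyc]; simp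
    have hz0 : T.toCycles ≫ z = 0 := Cofan.IsColimit.hom_ext h₁ _ _ (fun n => by
      change (ι n).τ₁ ≫ _ = (ι n).τ₁ ≫ _
      rw [← assoc, ← ShortComplex.toCycles_naturality, assoc, hz]
      simp)
    refine ⟨T.descHomology z hz0, fun n => ?_⟩
    rw [← cancel_epi (S n).homologyπ, ← hz]
    simp
  · rw [← cancel_epi T.homologyπ]
    refine hcext fun n => ?_
    simp only [← ShortComplex.homologyπ_naturality_assoc, hxy]

/-- Homology of short complexes commutes with countable products, when these preserve
epimorphisms. -/
lemma nonempty_isLimit_homology (hC : CoprodMono Cᵒᵖ) [HasLimitsOfShape (Discrete ℕ) C]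
    (S : ℕ → ShortComplex C) (T : ShortComplex C) (π : ∀ n, T ⟶ S n)
    (h₁ : IsLimit (Fan.mk T.X₁ (fun n => (π n).τ₁)))
    (h₂ : IsLimit (Fan.mk T.X₂ (fun n => (π n).τ₂)))
    (h₃ : IsLimit (Fan.mk T.X₃ (fun n => (π n).τ₃))) :
    Nonempty (IsLimit (Fan.mk T.homology (fun n => ShortComplex.homologyMap (π n)))) := by
  have : HasColimitsOfShape (Discrete ℕ) Cᵒᵖ :=
    ⟨fun F => hasColimit_of_iso (Discrete.natIsoFunctor (F := F))⟩
  obtain ⟨h⟩ := nonempty_isColimit_homology hC (fun n => (S n).op) T.op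
    (fun n => ShortComplex.opMap (π n)) (Fan.IsLimit.op h₃) (Fan.IsLimit.op h₂)
    (Fan.IsLimit.op h₁)
  have e (n : ℕ) : ShortComplex.homologyMap (ShortComplex.opMap (π n)) =
      (S n).homologyOpIso.hom ≫ (ShortComplex.homologyMap (π n)).op ≫ T.homologyOpIso.inv := by
    rw [ShortComplex.homologyMap_op]; simp
  refine nonempty_isLimit_fan _ (fun W w => ?_) (fun W x y hxy => ?_)
  · let d := Cofan.IsColimit.desc h (fun n => (S n).homologyOpIso.hom ≫ (w n).op)
    have hd (n : ℕ) : ShortComplex.homologyMap (ShortComplex.opMap (π n)) ≫ d =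
      (S n).homologyOpIso.hom ≫ (w n).op := Cofan.IsColimit.fac h _ n
    refine ⟨(T.homologyOpIso.inv ≫ d).unop, fun n => Quiver.Hom.op_inj ?_⟩
    have := hd n
    rw [e] at this
    simp only [assoc, Iso.cancel_iso_hom_left] at this
    exact this
  · apply Quiver.Hom.op_inj
    rw [← cancel_epi T.homologyOpIso.hom]
    refine Cofan.IsColimit.hom_ext h _ _ (fun n => ?_)
    change ShortComplex.homologyMap (ShortComplex.opMap (π n)) ≫ _ =
      ShortComplex.homologyMap (ShortComplex.opMap (π n)) ≫ _
    rw [e]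
    simp only [assoc, Iso.inv_hom_id_assoc, ← op_comp, hxy]
end Homology

/-! ### Countable (co)products in the derived category -/

section QCoprod
variable {C : Type u} [Category.{v} C]

/-- A coproduct of isomorphisms is an isomorphism. -/
lemma isIso_of_jointly {X Y : ℕ → C} (f : ∀ n, X n ⟶ Y n) [∀ n, IsIso (f n)] {P R : C}
    {a : ∀ n, X n ⟶ P} {b : ∀ n, Y n ⟶ R} (hP : IsColimit (Cofan.mk P a))
    (hR : IsColimit (Cofan.mk R b)) (g : P ⟶ R) (hg : ∀ n, a n ≫ g = f n ≫ b n) : IsIso g := by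
  let k : R ⟶ P := Cofan.IsColimit.desc hR (fun n => inv (f n) ≫ a n)
  have hk (n : ℕ) : b n ≫ k = inv (f n) ≫ a n := Cofan.IsColimit.fac hR _ n
  refine ⟨k, Cofan.IsColimit.hom_ext hP _ _ (fun n => ?_),
    Cofan.IsColimit.hom_ext hR _ _ (fun n => ?_)⟩
  · change a n ≫ _ = a n ≫ _
    rw [← assoc, hg, assoc, hk]; simp
  · change b n ≫ _ = b n ≫ _
    rw [← assoc, hk, assoc, hg]; simp

/-- A product of isomorphisms is an isomorphism. -/
lemma isIso_of_jointly' {X Y : ℕ → C} (f : ∀ n, X n ⟶ Y n) [∀ n, IsIso (f n)] {P R : C}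
    {a : ∀ n, P ⟶ X n} {b : ∀ n, R ⟶ Y n} (hP : IsLimit (Fan.mk P a))
    (hR : IsLimit (Fan.mk R b)) (g : P ⟶ R) (hg : ∀ n, g ≫ b n = a n ≫ f n) : IsIso g := by
  let k : R ⟶ P := Fan.IsLimit.lift hP (fun n => b n ≫ inv (f n))
  have hk (n : ℕ) : k ≫ a n = b n ≫ inv (f n) := Fan.IsLimit.fac hP _ n
  refine ⟨k, Fan.IsLimit.hom_ext hP _ _ (fun n => ?_),
    Fan.IsLimit.hom_ext hR _ _ (fun n => ?_)⟩
  · change _ ≫ a n = _ ≫ a n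
    rw [assoc, hk, ← assoc, hg]; simp
  · change _ ≫ b n = _ ≫ b n
    rw [assoc, hg, ← assoc, hk]; simp

variable [Abelian C]

lemma nonempty_isColimit_homologyMap (hC : CoprodMono C) [HasColimitsOfShape (Discrete ℕ) C]
    {K : ℕ → CochainComplex C ℤ} {P : CochainComplex C ℤ} {ι : ∀ n, K n ⟶ P}
    (hP : IsColimit (Cofan.mk P ι)) (i : ℤ) :
    Nonempty (IsColimit (Cofan.mk (P.homology i)
      (fun n => HomologicalComplex.homologyMap (ι n) i))) :=
  nonempty_isColimit_homology hC (fun n => (K n).sc i) (P.sc i)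
    (fun n => (HomologicalComplex.shortComplexFunctor C (.up ℤ) i).map (ι n))
    (isColimitCofanMkObjOfIsColimit (HomologicalComplex.eval C (.up ℤ) _) _ _ hP)
    (isColimitCofanMkObjOfIsColimit (HomologicalComplex.eval C (.up ℤ) _) _ _ hP)
    (isColimitCofanMkObjOfIsColimit (HomologicalComplex.eval C (.up ℤ) _) _ _ hP)

lemma nonempty_isLimit_homologyMap (hC : CoprodMono Cᵒᵖ) [HasLimitsOfShape (Discrete ℕ) C]
    {K : ℕ → CochainComplex C ℤ} {P : CochainComplex C ℤ} {π : ∀ n, P ⟶ K n}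
    (hP : IsLimit (Fan.mk P π)) (i : ℤ) :
    Nonempty (IsLimit (Fan.mk (P.homology i)
      (fun n => HomologicalComplex.homologyMap (π n) i))) :=
  nonempty_isLimit_homology hC (fun n => (K n).sc i) (P.sc i)
    (fun n => (HomologicalComplex.shortComplexFunctor C (.up ℤ) i).map (π n))
    (isLimitFanMkObjOfIsLimit (HomologicalComplex.eval C (.up ℤ) _) _ _ hP)
    (isLimitFanMkObjOfIsLimit (HomologicalComplex.eval C (.up ℤ) _) _ _ hP)
    (isLimitFanMkObjOfIsLimit (HomologicalComplex.eval C (.up ℤ) _) _ _ hP)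

variable [HasDerivedCategory.{w} C]
open DerivedCategory

lemma isIso_of_homology_eq {K : CochainComplex C ℤ} (u : Q.obj K ⟶ Q.obj K)
    (h : ∀ i, (homologyFunctor C i).map u = 𝟙 _) : IsIso u := by
  rw [DerivedCategory.isIso_iff]
  intro i
  rw [h]
  infer_instance

/-- The localization functor `Q` preserves countable coproducts. A family of morphisms out of
the `Q.obj (K n)` is represented by roofs, and the coproduct of the quasi-isomorphisms in these
roofs is a quasi-isomorphism. If a morphism `f` out of `Q.obj P` vanishes on all summands, its fibre
`a : Z ⟶ Q.obj P` receives compatible lifts of the summands, hence a map `k` such that `k ≫ a` is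
the identity on homology; therefore `f = 0`. -/
lemma nonempty_isColimit_Q (hC : CoprodMono C) [HasColimitsOfShape (Discrete ℕ) C]
    {K : ℕ → CochainComplex C ℤ} {P : CochainComplex C ℤ} {ι : ∀ n, K n ⟶ P}
    (hP : IsColimit (Cofan.mk P ι)) :
    Nonempty (IsColimit (Cofan.mk (Q.obj P) (fun n => Q.map (ι n)))) := by
  have hex (W : DerivedCategory C) (w : ∀ n, Q.obj (K n) ⟶ W) :
      ∃ h : Q.obj P ⟶ W, ∀ n, Q.map (ι n) ≫ h = w n := by
    let e := Q.objObjPreimageIso W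
    choose X' s hs g hg using fun n => right_fac (w n ≫ e.inv)
    let S : ∐ X' ⟶ P := Sigma.desc (fun n => s n ≫ ι n)
    let G : ∐ X' ⟶ Q.objPreimage W := Sigma.desc g
    have hS : IsIso (Q.map S) := by
      rw [isIso_Q_map_iff_quasiIso, quasiIso_iff]
      intro i
      rw [quasiIsoAt_iff_isIso_homologyMap]
      obtain ⟨h₁⟩ := nonempty_isColimit_homologyMap hC (coproductIsCoproduct X') i
      obtain ⟨h₂⟩ := nonempty_isColimit_homologyMap hC hP i
      have (n : ℕ) : IsIso (HomologicalComplex.homologyMap (s n) i) := by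
        have := (isIso_Q_map_iff_quasiIso C (s n)).1 (hs n)
        infer_instance
      refine isIso_of_jointly (fun n => HomologicalComplex.homologyMap (s n) i) h₁ h₂ _ (fun n => ?_)
      rw [← HomologicalComplex.homologyMap_comp, ← HomologicalComplex.homologyMap_comp]
      congr 1
      simp [S]
    refine ⟨inv (Q.map S) ≫ Q.map G ≫ e.hom, fun n => ?_⟩
    have h1 : Q.map (Sigma.ι X' n) ≫ Q.map S = Q.map (s n) ≫ Q.map (ι n) := by
      rw [← Q.map_comp, ← Q.map_comp]; simp [S]
    have h2 : Q.map (Sigma.ι X' n) ≫ Q.map G = Q.map (g n) := by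
      rw [← Q.map_comp]; simp [G]
    have h3 : Q.map (ι n) ≫ inv (Q.map S) = inv (Q.map (s n)) ≫ Q.map (Sigma.ι X' n) := by
      rw [IsIso.comp_inv_eq, assoc, h1]; simp
    rw [← assoc, h3, assoc, ← assoc _ (Q.map G), h2, ← assoc, ← hg]
    simp
  refine nonempty_isColimit_cofan _ hex (fun W h h' hh => ?_)
  rw [← sub_eq_zero]
  have hf (n : ℕ) : Q.map (ι n) ≫ (h - h') = 0 := by rw [Preadditive.comp_sub, hh, sub_self]
  generalize h - h' = f at hf
  obtain ⟨Z, a, b, hT⟩ := distinguished_cocone_triangle₁ f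
  choose l hl using fun n => dist_lift hT (Q.map (ι n)) (hf n)
  obtain ⟨k, hk⟩ := hex _ l
  have hu : IsIso (k ≫ a) := by
    apply isIso_of_homology_eq
    intro i
    obtain ⟨h₂⟩ := nonempty_isColimit_homologyMap hC hP i
    rw [← cancel_epi ((homologyFunctorFactors C i).inv.app P)]
    refine Cofan.IsColimit.hom_ext h₂ _ _ (fun n => ?_)
    change (HomologicalComplex.homologyFunctor C (.up ℤ) i).map (ι n) ≫ _ =
      (HomologicalComplex.homologyFunctor C (.up ℤ) i).map (ι n) ≫ _
    have hn : (HomologicalComplex.homologyFunctor C (.up ℤ) i).map (ι n) ≫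
        (homologyFunctorFactors C i).inv.app P = (homologyFunctorFactors C i).inv.app (K n) ≫
          (homologyFunctor C i).map (Q.map (ι n)) :=
      (homologyFunctorFactors C i).inv.naturality (ι n)
    have hn' : (homologyFunctor C i).map (Q.map (ι n)) ≫ (homologyFunctor C i).map (k ≫ a) =
        (homologyFunctor C i).map (Q.map (ι n)) := by
      rw [← Functor.map_comp, ← assoc, hk, hl]
    refine (assoc _ _ _).symm.trans ((congrArg (· ≫ _) hn).trans ?_)
    refine (assoc _ _ _).trans ((congrArg (_ ≫ ·) hn').trans (hn.symm.trans ?_))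
    exact congrArg (_ ≫ ·) (comp_id _).symm
  rw [← cancel_epi (k ≫ a), assoc, comp_zero]
  have : a ≫ f = 0 := dist_zero₁₂ hT
  rw [this, comp_zero]

/-- The localization functor `Q` preserves countable products: the dual argument of
`nonempty_isColimit_Q`. -/
lemma nonempty_isLimit_Q (hC : CoprodMono Cᵒᵖ) [HasLimitsOfShape (Discrete ℕ) C]
    {K : ℕ → CochainComplex C ℤ} {P : CochainComplex C ℤ} {π : ∀ n, P ⟶ K n}
    (hP : IsLimit (Fan.mk P π)) :
    Nonempty (IsLimit (Fan.mk (Q.obj P) (fun n => Q.map (π n)))) := by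
  have hex (W : DerivedCategory C) (w : ∀ n, W ⟶ Q.obj (K n)) :
      ∃ h : W ⟶ Q.obj P, ∀ n, h ≫ Q.map (π n) = w n := by
    let e := Q.objObjPreimageIso W
    choose X' g s hs hg using fun n => left_fac (e.hom ≫ w n)
    let S : P ⟶ ∏ᶜ X' := Pi.lift (fun n => π n ≫ s n)
    let G : Q.objPreimage W ⟶ ∏ᶜ X' := Pi.lift g
    have hS : IsIso (Q.map S) := by
      rw [isIso_Q_map_iff_quasiIso, quasiIso_iff]
      intro i
      rw [quasiIsoAt_iff_isIso_homologyMap]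
      obtain ⟨h₁⟩ := nonempty_isLimit_homologyMap hC (productIsProduct X') i
      obtain ⟨h₂⟩ := nonempty_isLimit_homologyMap hC hP i
      have (n : ℕ) : IsIso (HomologicalComplex.homologyMap (s n) i) := by
        have := (isIso_Q_map_iff_quasiIso C (s n)).1 (hs n)
        infer_instance
      refine isIso_of_jointly' (fun n => HomologicalComplex.homologyMap (s n) i) h₂ h₁ _
        (fun n => ?_)
      rw [← HomologicalComplex.homologyMap_comp, ← HomologicalComplex.homologyMap_comp]
      congr 1
      simp [S]
    refine ⟨e.inv ≫ Q.map G ≫ inv (Q.map S), fun n => ?_⟩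
    have h1 : Q.map S ≫ Q.map (Pi.π X' n) = Q.map (π n) ≫ Q.map (s n) := by
      rw [← Q.map_comp, ← Q.map_comp]; simp [S]
    have h2 : Q.map G ≫ Q.map (Pi.π X' n) = Q.map (g n) := by
      rw [← Q.map_comp]; simp [G]
    have h3 : inv (Q.map S) ≫ Q.map (π n) = Q.map (Pi.π X' n) ≫ inv (Q.map (s n)) := by
      rw [IsIso.inv_comp_eq, ← assoc, h1]; simp
    rw [assoc, assoc, h3, ← assoc (Q.map G), h2, ← hg]
    simp
  refine nonempty_isLimit_fan _ hex (fun W h h' hh => ?_)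
  rw [← sub_eq_zero]
  have hf (n : ℕ) : (h - h') ≫ Q.map (π n) = 0 := by rw [Preadditive.sub_comp, hh, sub_self]
  generalize h - h' = f at hf
  obtain ⟨Z, a, b, hT⟩ := distinguished_cocone_triangle f
  choose l hl using fun n => dist_desc hT (Q.map (π n)) (hf n)
  obtain ⟨k, hk⟩ := hex _ l
  have hu : IsIso (a ≫ k) := by
    apply isIso_of_homology_eq
    intro i
    obtain ⟨h₂⟩ := nonempty_isLimit_homologyMap hC hP i
    rw [← cancel_mono ((homologyFunctorFactors C i).hom.app P)]
    refine Fan.IsLimit.hom_ext h₂ _ _ (fun n => ?_)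
    change _ ≫ (HomologicalComplex.homologyFunctor C (.up ℤ) i).map (π n) =
      _ ≫ (HomologicalComplex.homologyFunctor C (.up ℤ) i).map (π n)
    have hn : (homologyFunctorFactors C i).hom.app P ≫
        (HomologicalComplex.homologyFunctor C (.up ℤ) i).map (π n) =
          (homologyFunctor C i).map (Q.map (π n)) ≫ (homologyFunctorFactors C i).hom.app (K n) :=
      ((homologyFunctorFactors C i).hom.naturality (π n)).symm
    have hn' : (homologyFunctor C i).map (a ≫ k) ≫ (homologyFunctor C i).map (Q.map (π n)) =
        (homologyFunctor C i).map (Q.map (π n)) := by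
      rw [← Functor.map_comp, assoc, hk, hl]
    refine (assoc _ _ _).trans ((congrArg (_ ≫ ·) hn).trans ?_)
    refine (assoc _ _ _).symm.trans ((congrArg (· ≫ _) hn').trans (hn.symm.trans ?_))
    rw [id_comp]
  rw [← cancel_mono (a ≫ k), ← assoc, zero_comp]
  have : f ≫ a = 0 := dist_zero₁₂ hT
  rw [this, zero_comp]

end QCoprod

/-! ### Sequential homotopy (co)limits -/

section Hocolim
variable {T : Type u} [Category.{v} T] [HasZeroObject T] [HasShift T ℤ] [Preadditive T]
  [∀ n : ℤ, (shiftFunctor T n).Additive] [Pretriangulated T]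

/-- `X`, with the maps `j n : Y n ⟶ X`, is a homotopy colimit of the sequence `(Y, t)`:
the coproduct `P` of the `Y n` exists, and `X` is the cone of `identity - shift` on `P`. -/
def IsHocolim (Y : ℕ → T) (t : ∀ n, Y n ⟶ Y (n + 1)) (X : T) (j : ∀ n, Y n ⟶ X) : Prop :=
  ∃ (P : T) (ι : ∀ n, Y n ⟶ P) (f : P ⟶ P) (g : P ⟶ X) (h : X ⟶ P⟦(1 : ℤ)⟧),
    Nonempty (IsColimit (Cofan.mk P ι)) ∧ Triangle.mk f g h ∈ distTriang T ∧
    (∀ n, ι n ≫ f = ι n - t n ≫ ι (n + 1)) ∧ ∀ n, ι n ≫ g = j n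

/-- `X`, with the maps `j n : X ⟶ Y n`, is a homotopy limit of the inverse sequence `(Y, t)`:
the product `P` of the `Y n` exists, and `X` is the fibre of `identity - shift` on `P`. -/
def IsHolim (Y : ℕ → T) (t : ∀ n, Y (n + 1) ⟶ Y n) (X : T) (j : ∀ n, X ⟶ Y n) : Prop :=
  ∃ (P : T) (π : ∀ n, P ⟶ Y n) (g : X ⟶ P) (f : P ⟶ P) (h : P ⟶ X⟦(1 : ℤ)⟧),
    Nonempty (IsLimit (Fan.mk P π)) ∧ Triangle.mk g f h ∈ distTriang T ∧
    (∀ n, f ≫ π n = π n - π (n + 1) ≫ t n) ∧ ∀ n, g ≫ π n = j n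

variable {Y : ℕ → T} {X : T}

lemma map_dist (F : T ⥤ T) [F.CommShift ℤ] [F.IsTriangulated] {X Y Z : T} {f : X ⟶ Y} {g : Y ⟶ Z}
    {h : Z ⟶ X⟦(1 : ℤ)⟧} (hT : Triangle.mk f g h ∈ distTriang T) :
    Triangle.mk (F.map f) (F.map g) (F.map h ≫ (F.commShiftIso (1 : ℤ)).hom.app X) ∈ distTriang T :=
  F.map_distinguished _ hT

lemma IsHocolim.map {t : ∀ n, Y n ⟶ Y (n + 1)} {j : ∀ n, Y n ⟶ X}
    (H : IsHocolim Y t X j) (F : T ⥤ T) [F.CommShift ℤ] [F.IsTriangulated]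
    [PreservesColimitsOfShape (Discrete ℕ) F] :
    IsHocolim (fun n => F.obj (Y n)) (fun n => F.map (t n)) (F.obj X) (fun n => F.map (j n)) := by
  obtain ⟨P, ι, f, g, h, ⟨hP⟩, hT, hf, hg⟩ := H
  exact ⟨F.obj P, fun n => F.map (ι n), _, _, _, ⟨isColimitCofanMkObjOfIsColimit F _ _ hP⟩,
    map_dist F hT, fun n => by rw [← F.map_comp, hf]; simp, fun n => by rw [← F.map_comp, hg]⟩

lemma IsHolim.map {t : ∀ n, Y (n + 1) ⟶ Y n} {j : ∀ n, X ⟶ Y n}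
    (H : IsHolim Y t X j) (F : T ⥤ T) [F.CommShift ℤ] [F.IsTriangulated]
    [PreservesLimitsOfShape (Discrete ℕ) F] :
    IsHolim (fun n => F.obj (Y n)) (fun n => F.map (t n)) (F.obj X) (fun n => F.map (j n)) := by
  obtain ⟨P, π, g, f, h, ⟨hP⟩, hT, hf, hg⟩ := H
  exact ⟨F.obj P, fun n => F.map (π n), _, _, _, ⟨isLimitFanMkObjOfIsLimit F _ _ hP⟩,
    map_dist F hT, fun n => by rw [← F.map_comp, hf]; simp, fun n => by rw [← F.map_comp, hg]⟩

/-- An isomorphism of sequences extends, not uniquely, to their homotopy colimits. `IsHolim.exists_iso` is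
the dual. -/
lemma IsHocolim.exists_iso {t : ∀ n, Y n ⟶ Y (n + 1)} {j : ∀ n, Y n ⟶ X}
    (H : IsHocolim Y t X j) {Y' : ℕ → T} {X' : T} {t' : ∀ n, Y' n ⟶ Y' (n + 1)}
    {j' : ∀ n, Y' n ⟶ X'} (H' : IsHocolim Y' t' X' j') (φ : ∀ n, Y n ≅ Y' n)
    (hφ : ∀ n, t n ≫ (φ (n + 1)).hom = (φ n).hom ≫ t' n) :
    ∃ e : X ≅ X', ∀ n, j n ≫ e.hom = (φ n).hom ≫ j' n := by
  obtain ⟨P, ι, f, g, h, ⟨hP⟩, hT, hf, hg⟩ := H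
  obtain ⟨P', ι', f', g', h', ⟨hP'⟩, hT', hf', hg'⟩ := H'
  let a : P ⟶ P' := Cofan.IsColimit.desc hP (fun n => (φ n).hom ≫ ι' n)
  have ha (n : ℕ) : ι n ≫ a = (φ n).hom ≫ ι' n := Cofan.IsColimit.fac hP _ n
  have : IsIso a := isIso_of_jointly (fun n => (φ n).hom) hP hP' a ha
  have hab : f ≫ (asIso a).hom = (asIso a).hom ≫ f' := by
    refine Cofan.IsColimit.hom_ext hP _ _ (fun n => ?_)
    change ι n ≫ f ≫ a = ι n ≫ a ≫ f'
    rw [← assoc, hf, ← assoc, ha, assoc, hf', Preadditive.sub_comp, assoc, ha, ha, ← assoc, hφ]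
    simp
  obtain ⟨c, hc, -⟩ := dist_iso₃ hT hT' (asIso a) (asIso a) hab
  refine ⟨c, fun n => ?_⟩
  rw [← hg, assoc, hc, asIso_hom, ← assoc, ha, assoc, hg']

lemma IsHolim.exists_iso {t : ∀ n, Y (n + 1) ⟶ Y n} {j : ∀ n, X ⟶ Y n}
    (H : IsHolim Y t X j) {Y' : ℕ → T} {X' : T} {t' : ∀ n, Y' (n + 1) ⟶ Y' n}
    {j' : ∀ n, X' ⟶ Y' n} (H' : IsHolim Y' t' X' j') (φ : ∀ n, Y n ≅ Y' n)
    (hφ : ∀ n, t n ≫ (φ n).hom = (φ (n + 1)).hom ≫ t' n) :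
    ∃ e : X ≅ X', ∀ n, j n ≫ (φ n).hom = e.hom ≫ j' n := by
  obtain ⟨P, π, g, f, h, ⟨hP⟩, hT, hf, hg⟩ := H
  obtain ⟨P', π', g', f', h', ⟨hP'⟩, hT', hf', hg'⟩ := H'
  let a : P ⟶ P' := Fan.IsLimit.lift hP' (fun n => π n ≫ (φ n).hom)
  have ha (n : ℕ) : a ≫ π' n = π n ≫ (φ n).hom := Fan.IsLimit.fac hP' _ n
  have : IsIso a := isIso_of_jointly' (fun n => (φ n).hom) hP hP' a ha
  have hab : f ≫ (asIso a).hom = (asIso a).hom ≫ f' := by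
    refine Fan.IsLimit.hom_ext hP' _ _ (fun n => ?_)
    change (f ≫ a) ≫ π' n = (a ≫ f') ≫ π' n
    rw [assoc, ha, ← assoc, hf, assoc, hf', Preadditive.comp_sub, ha, ← assoc a, ha, assoc, ← hφ]
    simp
  obtain ⟨c, hc, -⟩ := dist_iso₁ hT hT' (asIso a) (asIso a) hab
  refine ⟨c, fun n => ?_⟩
  rw [← hg, ← hg', ← assoc, ← hc, assoc, assoc, asIso_hom, ha]

end Hocolim

/-! ### Homotopy (co)limits of sequences of complexes -/

section Q
variable {C : Type u} [Category.{v} C] [Abelian C] [HasDerivedCategory.{w} C]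
open DerivedCategory

/-- A complex `K` is the homotopy colimit of a sequence of complexes over `K` which in each degree
eventually agrees with `K`: the telescope sequence is then degreewise split exact. -/
lemma isHocolim_Q (hC : CoprodMono C) [HasColimitsOfShape (Discrete ℕ) C]
    (Y : ℕ → CochainComplex C ℤ) (t : ∀ n, Y n ⟶ Y (n + 1)) (K : CochainComplex C ℤ)
    (j : ∀ n, Y n ⟶ K) (hj : ∀ n, t n ≫ j (n + 1) = j n)
    (hN : ∀ i, ∃ N, ∀ n, N ≤ n → IsIso ((j n).f i)) :
    IsHocolim (fun n => Q.obj (Y n)) (fun n => Q.map (t n)) (Q.obj K) (fun n => Q.map (j n)) := by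
  let ι := Sigma.ι Y
  let f : ∐ Y ⟶ ∐ Y := Sigma.desc (fun n => ι n - t n ≫ ι (n + 1))
  let g : ∐ Y ⟶ K := Sigma.desc j
  have hf (n : ℕ) : ι n ≫ f = ι n - t n ≫ ι (n + 1) := by simp [f, ι]
  have hg (n : ℕ) : ι n ≫ g = j n := by simp [g, ι]
  have zero : f ≫ g = 0 := Sigma.hom_ext _ _ (fun n => by
    change ι n ≫ _ = ι n ≫ _
    rw [← assoc, hf, Preadditive.sub_comp, assoc, hg, hg, hj]
    simp)
  have hS : (ShortComplex.mk f g zero).ShortExact := by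
    apply HomologicalComplex.shortExact_of_degreewise_shortExact
    intro i
    obtain ⟨N, hN⟩ := hN i
    obtain ⟨s⟩ := telescope_splitting (fun n => (Y n).X i) (fun n => (t n).f i)
      (fun n => (j n).f i) (fun n => by rw [← HomologicalComplex.comp_f, hj]) N hN
      (fun n => (ι n).f i) (isColimitCofanMkObjOfIsColimit (HomologicalComplex.eval C (.up ℤ) i) _ _
        (coproductIsCoproduct Y)) (f.f i) (g.f i)
      (fun n => by rw [← HomologicalComplex.comp_f, hf]; simp)
      (fun n => by rw [← HomologicalComplex.comp_f, hg])
      (by rw [← HomologicalComplex.comp_f, zero]; simp)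
    exact s.shortExact
  obtain ⟨hP⟩ := nonempty_isColimit_Q hC (coproductIsCoproduct Y)
  exact ⟨Q.obj (∐ Y), fun n => Q.map (ι n), Q.map f, Q.map g, triangleOfSESδ hS, ⟨hP⟩,
    triangleOfSES_distinguished hS, fun n => by rw [← Q.map_comp, hf]; simp,
    fun n => by rw [← Q.map_comp, hg]⟩

/-- A complex `K` is the homotopy limit of an inverse sequence of complexes under `K` which in each
degree eventually agrees with `K`. -/
lemma isHolim_Q (hC : CoprodMono Cᵒᵖ) [HasLimitsOfShape (Discrete ℕ) C]
    (Y : ℕ → CochainComplex C ℤ) (t : ∀ n, Y (n + 1) ⟶ Y n) (K : CochainComplex C ℤ)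
    (j : ∀ n, K ⟶ Y n) (hj : ∀ n, j (n + 1) ≫ t n = j n)
    (hN : ∀ i, ∃ N, ∀ n, N ≤ n → IsIso ((j n).f i)) :
    IsHolim (fun n => Q.obj (Y n)) (fun n => Q.map (t n)) (Q.obj K) (fun n => Q.map (j n)) := by
  let π := Pi.π Y
  let f : ∏ᶜ Y ⟶ ∏ᶜ Y := Pi.lift (fun n => π n - π (n + 1) ≫ t n)
  let g : K ⟶ ∏ᶜ Y := Pi.lift j
  have hf (n : ℕ) : f ≫ π n = π n - π (n + 1) ≫ t n := by simp [f, π]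
  have hg (n : ℕ) : g ≫ π n = j n := by simp [g, π]
  have zero : g ≫ f = 0 := Pi.hom_ext _ _ (fun n => by
    change _ ≫ π n = _ ≫ π n
    rw [assoc, hf, Preadditive.comp_sub, ← assoc, hg, hg, hj]
    simp)
  have hS : (ShortComplex.mk g f zero).ShortExact := by
    apply HomologicalComplex.shortExact_of_degreewise_shortExact
    intro i
    obtain ⟨N, hN⟩ := hN i
    obtain ⟨s⟩ := cotelescope_splitting (fun n => (Y n).X i) (fun n => (t n).f i)
      (fun n => (j n).f i) (fun n => by rw [← HomologicalComplex.comp_f, hj]) N hN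
      (fun n => (π n).f i) (isLimitFanMkObjOfIsLimit (HomologicalComplex.eval C (.up ℤ) i) _ _
        (productIsProduct Y)) (f.f i) (g.f i)
      (fun n => by rw [← HomologicalComplex.comp_f, hf]; simp)
      (fun n => by rw [← HomologicalComplex.comp_f, hg])
      (by rw [← HomologicalComplex.comp_f, zero]; simp)
    exact s.shortExact
  obtain ⟨hP⟩ := nonempty_isLimit_Q hC (productIsProduct Y)
  exact ⟨Q.obj (∏ᶜ Y), fun n => Q.map (π n), Q.map g, Q.map f, triangleOfSESδ hS, ⟨hP⟩,
    triangleOfSES_distinguished hS, fun n => by rw [← Q.map_comp, hf]; simp,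
    fun n => by rw [← Q.map_comp, hg]⟩

end Q

/-! ### Brutal truncations -/

section Brutal
variable {C : Type u} [Category.{v} C] [Abelian C]
open Classical in
/-- The object of `C` which is `X` if `P` holds, and `0` otherwise. -/
noncomputable def onlyIf (P : Prop) (X : C) : C := if P then X else 0

open Classical in
/-- The canonical map `onlyIf P X ⟶ X`. -/
noncomputable def onlyIfι (P : Prop) (X : C) : onlyIf P X ⟶ X :=
  if h : P then eqToHom (if_pos h) else 0

open Classical in
/-- The canonical map `X ⟶ onlyIf P X`. -/
noncomputable def onlyIfπ (P : Prop) (X : C) : X ⟶ onlyIf P X :=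
  if h : P then eqToHom (if_pos h).symm else 0

lemma isZero_onlyIf {P : Prop} (h : ¬ P) (X : C) : IsZero (onlyIf P X) := by
  rw [onlyIf, if_neg h]
  exact isZero_zero C

lemma onlyIf_ι_π (P : Prop) (X : C) : onlyIfι P X ≫ onlyIfπ P X = 𝟙 _ := by
  by_cases h : P
  · rw [onlyIfι, onlyIfπ, dif_pos h, dif_pos h]
    exact eqToHom_trans _ _
  · exact (isZero_onlyIf h X).eq_of_src _ _

lemma onlyIf_π_ι {P : Prop} (h : P) (X : C) : onlyIfπ P X ≫ onlyIfι P X = 𝟙 _ := by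
  rw [onlyIfι, onlyIfπ, dif_pos h, dif_pos h]
  exact eqToHom_trans _ _

lemma onlyIfπ_eq_zero {P : Prop} (h : ¬ P) (X : C) : onlyIfπ P X = 0 := by
  simp [onlyIfπ, h]

lemma onlyIfι_eq_zero {P : Prop} (h : ¬ P) (X : C) : onlyIfι P X = 0 := by
  simp [onlyIfι, h]

lemma onlyIf_comp {P P' P'' : Prop} (h : P → P'' → P') (X : C) :
    (onlyIfι P X ≫ onlyIfπ P' X) ≫ onlyIfι P' X ≫ onlyIfπ P'' X = onlyIfι P X ≫ onlyIfπ P'' X := by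
  by_cases h₁ : P
  · by_cases h₂ : P''
    · rw [assoc, ← assoc (onlyIfπ P' _), onlyIf_π_ι (h h₁ h₂)]
      simp
    · exact (isZero_onlyIf h₂ _).eq_of_tgt _ _
  · exact (isZero_onlyIf h₁ _).eq_of_src _ _

lemma shortExact_of_isIso_left {X Y Z : C} (f : X ⟶ Y) (g : Y ⟶ Z) (zero : f ≫ g = 0) [IsIso f]
    (hZ : IsZero Z) : (ShortComplex.mk f g zero).ShortExact :=
  ShortComplex.Splitting.shortExact
    { r := inv f
      s := 0
      f_r := by simp
      s_g := hZ.eq_of_src _ _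
      id := by simp }

lemma shortExact_of_isIso_right {X Y Z : C} (f : X ⟶ Y) (g : Y ⟶ Z) (zero : f ≫ g = 0) [IsIso g]
    (hX : IsZero X) : (ShortComplex.mk f g zero).ShortExact :=
  ShortComplex.Splitting.shortExact
    { r := 0
      s := inv g
      f_r := hX.eq_of_src _ _
      s_g := by simp
      id := by simp }

/-- The brutal truncation of `K` which keeps the terms in the degrees satisfying `p`. -/
noncomputable def br (p : ℤ → Prop) (K : CochainComplex C ℤ) : CochainComplex C ℤ where
  X i := onlyIf (p i) (K.X i)
  d i j := onlyIfι _ _ ≫ K.d i j ≫ onlyIfπ _ _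
  shape i j h := by rw [K.shape i j h]; simp
  d_comp_d' i j k _ _ := by
    by_cases h : p j
    · rw [assoc, assoc, ← assoc (onlyIfπ (p j) _), onlyIf_π_ι h]
      simp
    · exact (by rw [onlyIfπ_eq_zero h]; simp)

/-- The compatibility ensuring that the degreewise maps, which are the identity in the degrees
satisfying both `p` and `q` and zero elsewhere, form a morphism `br p K ⟶ br q K`: the two paths
around the square in degrees `i`, `i + 1` with nonzero corners `K.X i` and `K.X (i + 1)` are both
`K.d i (i + 1)` or both zero. -/
def BrRel (p q : ℤ → Prop) : Prop := ∀ i, p i → q (i + 1) → (q i ↔ p (i + 1))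

/-- The canonical map between brutal truncations. -/
noncomputable def brMap (p q : ℤ → Prop) (h : BrRel p q) (K : CochainComplex C ℤ) :
    br p K ⟶ br q K where
  f i := onlyIfι _ _ ≫ onlyIfπ _ _
  comm' i j hij := by
    obtain rfl : i + 1 = j := hij
    dsimp [br]
    by_cases h₁ : p i
    · by_cases h₂ : q (i + 1)
      · have := h i h₁ h₂
        by_cases h₃ : q i
        · simp only [assoc]
          rw [← assoc (onlyIfπ (q i) _), onlyIf_π_ι h₃, ← assoc (onlyIfπ (p (i + 1)) _),
            onlyIf_π_ι (this.1 h₃)]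
          simp
        · rw [onlyIfπ_eq_zero h₃, onlyIfπ_eq_zero (fun h => h₃ (this.2 h))]
          simp
      · exact (isZero_onlyIf h₂ _).eq_of_tgt _ _
    · exact (isZero_onlyIf h₁ _).eq_of_src _ _

lemma brMap_f_comp (p q r : ℤ → Prop) (hpq : BrRel p q) (hqr : BrRel q r) (K : CochainComplex C ℤ)
    (i : ℤ) (h : p i → r i → q i) :
    (brMap p q hpq K).f i ≫ (brMap q r hqr K).f i = onlyIfι (p i) _ ≫ onlyIfπ (r i) _ :=
  onlyIf_comp h _

lemma brMap_comp (p q r : ℤ → Prop) (hpq : BrRel p q) (hqr : BrRel q r) (hpr : BrRel p r)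
    (K : CochainComplex C ℤ) (h : ∀ i, p i → r i → q i) :
    brMap p q hpq K ≫ brMap q r hqr K = brMap p r hpr K := by
  ext i
  exact brMap_f_comp p q r hpq hqr K i (h i)

lemma isIso_brMap_f (p q : ℤ → Prop) (h : BrRel p q) (K : CochainComplex C ℤ) (i : ℤ)
    (hi : p i ↔ q i) : IsIso ((brMap p q h K).f i) :=
  ⟨onlyIfι (q i) _ ≫ onlyIfπ (p i) _,
    (onlyIf_comp (fun h _ => hi.1 h) _).trans (onlyIf_ι_π _ _),
    (onlyIf_comp (fun h _ => hi.2 h) _).trans (onlyIf_ι_π _ _)⟩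

/-- The brutal truncation keeping all degrees is the complex itself. -/
noncomputable def brTrueIso (p : ℤ → Prop) (hp : ∀ i, p i) (K : CochainComplex C ℤ) : br p K ≅ K :=
  HomologicalComplex.Hom.isoOfComponents
    (fun i => ⟨onlyIfι (p i) (K.X i), onlyIfπ _ _, onlyIf_ι_π _ _, onlyIf_π_ι (hp i) _⟩)
    (fun i j _ => by
      dsimp [br]
      rw [assoc, assoc, onlyIf_π_ι (hp j)]
      simp)

lemma br_strictlyLE (p : ℤ → Prop) (n : ℤ) (hp : ∀ i, p i → i ≤ n) (K : CochainComplex C ℤ) :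
    (br p K).IsStrictlyLE n := by
  rw [CochainComplex.isStrictlyLE_iff]
  exact fun i hi => isZero_onlyIf (fun h => by have := hp i h; lia) _

lemma br_strictlyGE (p : ℤ → Prop) (n : ℤ) (hp : ∀ i, p i → n ≤ i) (K : CochainComplex C ℤ) :
    (br p K).IsStrictlyGE n := by
  rw [CochainComplex.isStrictlyGE_iff]
  exact fun i hi => isZero_onlyIf (fun h => by have := hp i h; lia) _

variable [HasDerivedCategory.{w} C]
open DerivedCategory

lemma br_isLE (p : ℤ → Prop) (n : ℤ) (hp : ∀ i, p i → i ≤ n) (K : CochainComplex C ℤ) :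
    (Q.obj (br p K)).IsLE n := by
  have := br_strictlyLE p n hp K
  infer_instance

lemma br_isGE (p : ℤ → Prop) (n : ℤ) (hp : ∀ i, p i → n ≤ i) (K : CochainComplex C ℤ) :
    (Q.obj (br p K)).IsGE n := by
  have := br_strictlyGE p n hp K
  infer_instance

/-- If `p` is the disjoint union of `q` and `r`, the truncations fit in a triangle. -/
lemma br_triangle (q p r : ℤ → Prop) (hqp : BrRel q p) (hpr : BrRel p r)
    (hdec : ∀ i, p i ↔ q i ∨ r i) (hdisj : ∀ i, q i → ¬ r i) (K : CochainComplex C ℤ) :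
    ∃ δ, Triangle.mk (Q.map (brMap q p hqp K)) (Q.map (brMap p r hpr K)) δ ∈
      distTriang (DerivedCategory C) := by
  have z (i : ℤ) : (brMap q p hqp K).f i ≫ (brMap p r hpr K).f i = 0 := by
    rw [brMap_f_comp _ _ _ _ _ _ _ (fun h _ => (hdec i).2 (Or.inl h))]
    by_cases h : q i
    · rw [onlyIfπ_eq_zero (hdisj i h), comp_zero]; rfl
    · rw [onlyIfι_eq_zero h, zero_comp]; rfl
  have zero : brMap q p hqp K ≫ brMap p r hpr K = 0 := by
    ext i
    exact z i
  have hS : (ShortComplex.mk _ _ zero).ShortExact := by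
    apply HomologicalComplex.shortExact_of_degreewise_shortExact
    intro i
    by_cases h : q i
    · have := isIso_brMap_f q p hqp K i ⟨fun h => (hdec i).2 (Or.inl h), fun _ => h⟩
      have h0 : IsZero ((br r K).X i) := isZero_onlyIf (hdisj i h) _
      exact shortExact_of_isIso_left _ _ (z i) h0
    · have := isIso_brMap_f p r hpr K i
        ⟨fun h' => ((hdec i).1 h').resolve_left h, fun h' => (hdec i).2 (Or.inr h')⟩
      have h0 : IsZero ((br q K).X i) := isZero_onlyIf h _
      exact shortExact_of_isIso_right _ _ (z i) h0
  exact ⟨_, triangleOfSES_distinguished hS⟩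
end Brutal

/-! ### Good truncations -/

section smart

variable {C : Type u} [Category.{v} C] [Abelian C]

lemma isIso_πTruncGE_f {ι ι' : Type*} {c : ComplexShape ι} {c' : ComplexShape ι'}
    {D : Type*} [Category D] [Abelian D]
    (K : HomologicalComplex D c') (e : c.Embedding c') [e.IsTruncGE] {i : ι} {i' : ι'}
    (hi : e.f i = i') (hb : ¬ e.BoundaryGE i) : IsIso ((K.πTruncGE e).f i') := 
  (e.isIso_liftExtend_f_iff (K.restrictionToTruncGE' e) (K.restrictionToTruncGE'_hasLift e) hi).2
    (K.isIso_restrictionToTruncGE' e i hb)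

lemma isIso_ιTruncLE_f {ι ι' : Type*} {c : ComplexShape ι} {c' : ComplexShape ι'}
    {D : Type*} [Category D] [Abelian D]
    (K : HomologicalComplex D c') (e : c.Embedding c') [e.IsTruncLE] {i : ι} {i' : ι'}
    (hi : e.f i = i') (hb : ¬ e.BoundaryLE i) : IsIso ((K.ιTruncLE e).f i') := by
  have := isIso_πTruncGE_f K.op e.op (i := i) (i' := i') hi (by simpa using hb)
  exact inferInstanceAs (IsIso ((K.op.πTruncGE e.op).f i').unop)

lemma isIso_truncGE_f (K : CochainComplex C ℤ) (n i : ℤ) (h : n < i) :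
    IsIso ((K.πTruncGE n).f i) :=
  isIso_πTruncGE_f K (ComplexShape.embeddingUpIntGE n) (i := (i - n).natAbs)
    (by change n + _ = i; rw [Int.natAbs_of_nonneg (by lia), add_sub_cancel])
    (fun h ↦ by
      rw [ComplexShape.boundaryGE_embeddingUpIntGE_iff, Int.natAbs_eq_zero] at h
      lia)

lemma isIso_truncLE_f (K : CochainComplex C ℤ) (n i : ℤ) (h : i < n) :
    IsIso ((K.ιTruncLE n).f i) :=
  isIso_ιTruncLE_f K (ComplexShape.embeddingUpIntLE n) (i := (n - i).natAbs)
    (by change n - _ = i; rw [Int.natAbs_of_nonneg (by lia), sub_sub_cancel])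
    (fun h ↦ by
      rw [ComplexShape.boundaryLE_embeddingUpIntLE_iff, Int.natAbs_eq_zero] at h
      lia)

variable [HasDerivedCategory.{w} C]
open DerivedCategory

/-- Every complex is a homotopy colimit of bounded above complexes, its good truncations. -/
lemma exists_hocolim_truncLE (hC : CoprodMono C) [HasColimitsOfShape (Discrete ℕ) C]
    (K : CochainComplex C ℤ) :
    ∃ (Y : ℕ → CochainComplex C ℤ) (t : ∀ n, Q.obj (Y n) ⟶ Q.obj (Y (n + 1)))
      (j : ∀ n, Q.obj (Y n) ⟶ Q.obj K), IsHocolim (fun n => Q.obj (Y n)) t (Q.obj K) j ∧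
        ∀ n : ℕ, (Y n).IsStrictlyLE (n : ℤ) := by
  have hs (n : ℕ) : (K.truncLE (n : ℤ)).IsStrictlyLE ((n + 1 : ℕ) : ℤ) :=
    CochainComplex.isStrictlyLE_of_le _ (n : ℤ) _ (by simp)
  let t (n : ℕ) : K.truncLE (n : ℤ) ⟶ K.truncLE ((n + 1 : ℕ) : ℤ) :=
    have := hs n
    inv ((K.truncLE (n : ℤ)).ιTruncLE ((n + 1 : ℕ) : ℤ)) ≫
      CochainComplex.truncLEMap (K.ιTruncLE (n : ℤ)) ((n + 1 : ℕ) : ℤ)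
  refine ⟨fun n => K.truncLE n, _, _,
    isHocolim_Q hC (fun n : ℕ => K.truncLE (n : ℤ)) t K (fun n => K.ιTruncLE (n : ℤ)) ?_ ?_,
    fun n => inferInstance⟩
  · intro n
    have := hs n
    dsimp only [t]
    rw [assoc, CochainComplex.ιTruncLE_naturality, IsIso.inv_hom_id_assoc]
  · intro i
    refine ⟨(i + 1).toNat, fun n hn => isIso_truncLE_f _ _ _ (by lia)⟩

/-- Every complex is a homotopy limit of bounded below complexes, its good truncations. -/
lemma exists_holim_truncGE (hC : CoprodMono Cᵒᵖ) [HasLimitsOfShape (Discrete ℕ) C]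
    (K : CochainComplex C ℤ) :
    ∃ (Y : ℕ → CochainComplex C ℤ) (t : ∀ n, Q.obj (Y (n + 1)) ⟶ Q.obj (Y n))
      (j : ∀ n, Q.obj K ⟶ Q.obj (Y n)), IsHolim (fun n => Q.obj (Y n)) t (Q.obj K) j ∧
        ∀ n : ℕ, (Y n).IsStrictlyGE (-n : ℤ) := by
  have hs (n : ℕ) : (K.truncGE (-n : ℤ)).IsStrictlyGE (-((n + 1 : ℕ) : ℤ)) :=
    CochainComplex.isStrictlyGE_of_ge _ _ (-n : ℤ) (by simp)
  let t (n : ℕ) : K.truncGE (-((n + 1 : ℕ) : ℤ)) ⟶ K.truncGE (-n : ℤ) :=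
    have := hs n
    CochainComplex.truncGEMap (K.πTruncGE (-n : ℤ)) (-((n + 1 : ℕ) : ℤ)) ≫
      inv ((K.truncGE (-n : ℤ)).πTruncGE (-((n + 1 : ℕ) : ℤ)))
  refine ⟨fun n => K.truncGE (-n), _, _,
    isHolim_Q hC (fun n : ℕ => K.truncGE (-n : ℤ)) t K (fun n => K.πTruncGE (-n : ℤ)) ?_ ?_,
    fun n => inferInstance⟩
  · intro n
    have := hs n
    dsimp only [t]
    rw [← assoc, CochainComplex.πTruncGE_naturality, assoc, IsIso.hom_inv_id, comp_id]
  · intro i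
    refine ⟨(-i + 1).toNat, fun n hn => isIso_truncGE_f _ _ _ (by lia)⟩

end smart

/-! ### Isomorphisms `F X ≅ X` compatible with a morphism -/

section compat

variable {T : Type u} [Category.{v} T] (F : T ⥤ T)

/-- `f` is compatible with the isomorphisms `φ` and `ψ` between `F` of an object and the object. -/
def Cp {X Y : T} (φ : F.obj X ≅ X) (ψ : F.obj Y ≅ Y) (f : X ⟶ Y) : Prop :=
  F.map f ≫ ψ.hom = φ.hom ≫ f

variable {F} {X Y Z : T} {φ : F.obj X ≅ X} {ψ : F.obj Y ≅ Y} {χ : F.obj Z ≅ Z}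

lemma Cp.comp {f : X ⟶ Y} {g : Y ⟶ Z} (hf : Cp F φ ψ f) (hg : Cp F ψ χ g) : Cp F φ χ (f ≫ g) := by
  dsimp only [Cp] at *
  rw [F.map_comp, assoc, hg, ← assoc, hf, assoc]

lemma Cp.symm {f : X ≅ Y} (hf : Cp F φ ψ f.hom) : Cp F ψ φ f.inv := by
  dsimp only [Cp] at *
  rw [← cancel_epi (F.map f.hom), ← assoc, ← F.map_comp, ← assoc, hf]
  simp

lemma Cp.of_comp_left {f : X ≅ Y} {g : Y ⟶ Z} (hf : Cp F φ ψ f.hom) (hg : Cp F φ χ (f.hom ≫ g)) :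
    Cp F ψ χ g := by
  simpa using hf.symm.comp hg

lemma Cp.of_comp_right {f : X ⟶ Y} {g : Y ≅ Z} (hg : Cp F ψ χ g.hom) (hf : Cp F φ χ (f ≫ g.hom)) :
    Cp F φ ψ f := by
  simpa using hf.comp hg.symm

/-- Transport of an isomorphism `F X ≅ X` along `Y ≅ X`. -/
def conj (φ : F.obj X ≅ X) (i : Y ≅ X) : F.obj Y ≅ Y := F.mapIso i ≪≫ φ ≪≫ i.symm

lemma cp_conj (φ : F.obj X ≅ X) (i : Y ≅ X) : Cp F (conj φ i) φ i.hom := by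
  simp [Cp, conj]

variable [HasShift T ℤ] [F.CommShift ℤ]

/-- The isomorphism `F (X⟦a⟧) ≅ X⟦a⟧` induced by `F X ≅ X`. -/
def sh (φ : F.obj X ≅ X) (a : ℤ) : F.obj (X⟦a⟧) ≅ X⟦a⟧ :=
  (F.commShiftIso a).app X ≪≫ (shiftFunctor T a).mapIso φ

lemma sh_hom (φ : F.obj X ≅ X) (a : ℤ) :
    (sh φ a).hom = (F.commShiftIso a).hom.app X ≫ φ.hom⟦a⟧' := rfl

lemma Cp.shift {f : X ⟶ Y} (hf : Cp F φ ψ f) (a : ℤ) : Cp F (sh φ a) (sh ψ a) (f⟦a⟧') := by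
  dsimp only [Cp] at *
  rw [sh_hom, sh_hom, ← assoc, F.commShiftIso_hom_naturality, assoc, assoc, ← Functor.map_comp,
    ← Functor.map_comp, hf]

lemma cp_shiftAdd (φ : F.obj X ≅ X) (a b c : ℤ) (h : a + b = c) :
    Cp F (sh φ c) (sh (sh φ a) b) ((shiftFunctorAdd' T a b c h).hom.app X) := by
  dsimp only [Cp]
  rw [sh_hom, sh_hom, sh_hom, F.commShiftIso_add' h, Functor.CommShift.isoAdd'_hom_app]
  simp only [Functor.map_comp, assoc]
  rw [(shiftFunctorAdd' T a b c h).hom.naturality φ.hom]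
  simp

end compat

/-! ### Canonical isomorphisms on objects concentrated in one degree -/

section stalks

variable {C : Type u} [Category.{v} C] [Abelian C] [HasDerivedCategory.{w} C]
open DerivedCategory

variable {F : DerivedCategory C ⥤ DerivedCategory C}
  (η : singleFunctor C 0 ⋙ F ≅ singleFunctor C 0)

lemma cp_single {M M' : C} (f : (singleFunctor C 0).obj M ⟶ (singleFunctor C 0).obj M') :
    Cp F (η.app M) (η.app M') f := by
  obtain ⟨g, rfl⟩ := (singleFunctor C 0).map_surjective f
  exact η.hom.naturality g

lemma exists_iso_shift (m : ℤ) (Z : DerivedCategory C) [Z.IsGE m] [Z.IsLE m] :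
    ∃ M : C, Nonempty (Z ≅ ((singleFunctor C 0).obj M)⟦-m⟧) := by
  obtain ⟨M, ⟨i⟩⟩ := exists_iso_singleFunctor_obj_of_isGE_of_isLE Z m
  exact ⟨M, ⟨i ≪≫ ((singleFunctors C).shiftIso (-m) m 0 (by lia)).symm.app M⟩⟩

variable [F.CommShift ℤ]

/-- `ψ` is the isomorphism `F Z ≅ Z` induced by `η` on an object `Z` concentrated in degree `m`. -/
def Good (m : ℤ) {Z : DerivedCategory C} (ψ : F.obj Z ≅ Z) : Prop :=
  ∃ (M : C) (i : Z ≅ ((singleFunctor C 0).obj M)⟦-m⟧), Cp F ψ (sh (η.app M) (-m)) i.hom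

lemma exists_good (m : ℤ) (Z : DerivedCategory C) [Z.IsGE m] [Z.IsLE m] :
    ∃ ψ : F.obj Z ≅ Z, Good η m ψ := by
  obtain ⟨M, ⟨i⟩⟩ := exists_iso_shift m Z
  exact ⟨conj (sh (η.app M) (-m)) i, M, i, cp_conj _ _⟩

/-- The canonical isomorphisms are compatible with maps `Z ⟶ Z'⟦1⟧`, where `Z` is in degree `m` and
`Z'` in degree `m + 1`: up to a shift, such a map is a morphism between stalks in degree zero. -/
lemma Good.cp {η : singleFunctor C 0 ⋙ F ≅ singleFunctor C 0} {m m' : ℤ} {Z Z' : DerivedCategory C}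
    {ψ : F.obj Z ≅ Z} {ψ' : F.obj Z' ≅ Z'}
    (h : Good η m ψ) (h' : Good η m' ψ') (hm : m' = m + 1) (f : Z ⟶ Z'⟦(1 : ℤ)⟧) :
    Cp F ψ (sh ψ' 1) f := by
  obtain ⟨M, i, hi⟩ := h
  obtain ⟨M', i', hi'⟩ := h'
  have h₁ := (hi'.shift 1).comp
    (Cp.symm (f := (shiftFunctorAdd' _ (-m') 1 (-m) (by lia)).app _)
      (cp_shiftAdd (F := F) (η.app M') (-m') 1 (-m) (by lia)))
  obtain ⟨g, hg⟩ := (shiftFunctor (DerivedCategory C) (-m)).map_surjective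
    (i.inv ≫ f ≫ i'.hom⟦(1 : ℤ)⟧' ≫ (shiftFunctorAdd' _ (-m') 1 (-m) (by lia)).inv.app _)
  have h₂ := hi.comp ((cp_single η g).shift (-m))
  rw [hg, Iso.hom_inv_id_assoc] at h₂
  exact Cp.of_comp_right (g := (shiftFunctor (DerivedCategory C) (1 : ℤ)).mapIso i' ≪≫
    ((shiftFunctorAdd' _ (-m') 1 (-m) (by lia)).app _).symm) h₁ h₂

/-- The canonical isomorphisms are compatible with maps between objects in the same degree. -/
lemma Good.cp₀ {η : singleFunctor C 0 ⋙ F ≅ singleFunctor C 0} {m : ℤ} {Z Z' : DerivedCategory C}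
    {ψ : F.obj Z ≅ Z} {ψ' : F.obj Z' ≅ Z'}
    (h : Good η m ψ) (h' : Good η m ψ') (f : Z ⟶ Z') : Cp F ψ ψ' f := by
  obtain ⟨M, i, hi⟩ := h
  obtain ⟨M', i', hi'⟩ := h'
  obtain ⟨g, hg⟩ := (shiftFunctor (DerivedCategory C) (-m)).map_surjective (i.inv ≫ f ≫ i'.hom)
  have h₂ := hi.comp ((cp_single η g).shift (-m))
  rw [hg, Iso.hom_inv_id_assoc] at h₂
  exact hi'.of_comp_right h₂

end stalks

/-! ### The isomorphism `F X ≅ X` for every object -/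

/-- Dependent choice along a sequence of types. -/
lemma exists_seq {α : ℕ → Type*} (R : ∀ n, α n → α (n + 1) → Prop) (a₀ : α 0)
    (h : ∀ n a, ∃ b, R n a b) : ∃ s : ∀ n, α n, s 0 = a₀ ∧ ∀ n, R n (s n) (s (n + 1)) := by
  choose g hg using h
  exact ⟨fun n => Nat.rec a₀ g n, rfl, fun n => hg n _⟩

section cpDist

variable {T : Type u} [Category.{v} T] [HasZeroObject T] [HasShift T ℤ] [Preadditive T]
  [∀ n : ℤ, (shiftFunctor T n).Additive] [Pretriangulated T]
  {F : T ⥤ T} [F.CommShift ℤ]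

/-- Compatibility of a map to `Z⟦1⟧` can be tested after composition with `Z ⟶ W`, if there are
no maps to the shifted fibre. -/
lemma cp_of_comp_right {U Z W W' : T} {u : U ⟶ Z} {p : Z ⟶ W} {h : W ⟶ U⟦(1 : ℤ)⟧}
    (hT : Triangle.mk u p h ∈ distTriang T) {φ : F.obj Z ≅ Z} {ψ : F.obj W ≅ W}
    {ψ' : F.obj W' ≅ W'} {δ : W' ⟶ Z⟦(1 : ℤ)⟧} (hp : Cp F φ ψ p)
    (hδ : Cp F ψ' (sh ψ 1) (δ ≫ p⟦1⟧')) (hz : ∀ x : W' ⟶ U⟦(1 : ℤ)⟧, x = 0) :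
    Cp F ψ' (sh φ 1) δ := by
  have h₁ : (F.map δ ≫ (sh φ 1).hom - ψ'.hom ≫ δ) ≫ p⟦1⟧' = 0 := by
    have h₂ := hp.shift 1
    dsimp only [Cp] at h₂ hδ
    rw [Preadditive.sub_comp, assoc, ← h₂, assoc, ← hδ, F.map_comp, assoc, sub_self]
  obtain ⟨l, hl⟩ := dist_lift₁ (rot_of_distTriang _ hT) _ h₁
  have : l = 0 := by
    rw [← cancel_epi ψ'.inv]
    exact (hz _).trans comp_zero.symm
  rw [this, zero_comp] at hl
  exact sub_eq_zero.1 hl.symm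

variable [F.IsTriangulated]

/-- Isomorphisms on the outer terms of a triangle which are compatible with the connecting map
extend to the middle term. -/
lemma cp_dist₂ {X Y Z : T} {f : X ⟶ Y} {g : Y ⟶ Z} {h : Z ⟶ X⟦(1 : ℤ)⟧}
    (hT : Triangle.mk f g h ∈ distTriang T) {φ : F.obj X ≅ X} {χ : F.obj Z ≅ Z}
    (hh : Cp F χ (sh φ 1) h) : ∃ ψ : F.obj Y ≅ Y, Cp F φ ψ f ∧ Cp F ψ χ g := by
  refine dist_iso₂ (map_dist F hT) hT φ χ ?_
  rw [assoc]
  exact hh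

/-- Compatibility of a map from `Y` can be tested after composition with `W ⟶ Y`, if there are
no maps from the cofibre. -/
lemma cp_of_comp_left {W Y V W' : T} {q : W ⟶ Y} {v : Y ⟶ V} {h : V ⟶ W⟦(1 : ℤ)⟧}
    (hT : Triangle.mk q v h ∈ distTriang T) {φ : F.obj Y ≅ Y} {ψ : F.obj W ≅ W}
    {ψ' : F.obj W' ≅ W'} {δ : Y ⟶ W'} (hq : Cp F ψ φ q)
    (hδ : Cp F ψ ψ' (q ≫ δ)) (hz : ∀ x : F.obj V ⟶ W', x = 0) :
    Cp F φ ψ' δ := by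
  have h₁ : F.map q ≫ (F.map δ ≫ ψ'.hom - φ.hom ≫ δ) = 0 := by
    dsimp only [Cp] at hq hδ
    rw [Preadditive.comp_sub, ← assoc, ← F.map_comp, hδ, ← assoc, ← assoc, hq, sub_self]
  obtain ⟨l, hl⟩ := dist_desc (map_dist F hT) _ h₁
  rw [hz l, comp_zero] at hl
  exact sub_eq_zero.1 hl.symm

end cpDist

section towers

variable {C : Type u} [Category.{v} C] [Abelian C] [HasDerivedCategory.{w} C]
open DerivedCategory

variable {F : DerivedCategory C ⥤ DerivedCategory C} [F.CommShift ℤ]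

lemma exists_good_br (η : singleFunctor C 0 ⋙ F ≅ singleFunctor C 0)
    (m : ℤ) (K : CochainComplex C ℤ) :
    ∃ ψ : F.obj (Q.obj (br (· = m) K)) ≅ Q.obj (br (· = m) K), Good η m ψ := by
  have := br_isLE (· = m) m (by lia) K
  have := br_isGE (· = m) m (by lia) K
  exact exists_good η m _

variable [F.IsTriangulated]

/-- The canonical isomorphism on the top stalk of `br (· ≤ b) K` extends to all of it. The stalks
in degrees `b - 1`, `b - 2`, … are attached one at a time, keeping compatibility with the projection
to the lowest stalk, and the homotopy colimit is taken. -/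
lemma br_iso_le (η : singleFunctor C 0 ⋙ F ≅ singleFunctor C 0)
    (hC : CoprodMono C) [HasColimitsOfShape (Discrete ℕ) C]
    [PreservesColimitsOfShape (Discrete ℕ) F] (b : ℤ) (K : CochainComplex C ℤ)
    (ψ : F.obj (Q.obj (br (· = b) K)) ≅ Q.obj (br (· = b) K)) (hψ : Good η b ψ) :
    ∃ φ : F.obj (Q.obj (br (· ≤ b) K)) ≅ Q.obj (br (· ≤ b) K),
      Cp F ψ φ (Q.map (brMap (· = b) (· ≤ b) (by intro i; lia) K)) := by
  let p (n : ℕ) (i : ℤ) : Prop := b - n ≤ i ∧ i ≤ b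
  let s (n : ℕ) (i : ℤ) : Prop := i = b - n
  have hps (n : ℕ) : BrRel (p n) (s n) := by intro i; dsimp only [p, s]; lia
  have hpp (n : ℕ) : BrRel (p n) (p (n + 1)) := by intro i; dsimp only [p, s]; lia
  have hpb (n : ℕ) : BrRel (p n) (· ≤ b) := by intro i; dsimp only [p, s]; lia
  have hex (n : ℕ) : ∃ ψ' : F.obj (Q.obj (br (s n) K)) ≅ Q.obj (br (s n) K),
    Good η (b - n) ψ' := exists_good_br η (b - n) K
  choose ψ' hψ' using hex
  -- attaching the stalk in degree `b - n - 1`: its connecting map to `br (p n) K` is tested on the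
  -- lowest stalk `br (s n) K`, the remaining part living in degrees `> b - n`
  have step (n : ℕ) (φ : F.obj (Q.obj (br (p n) K)) ≅ Q.obj (br (p n) K))
      (hφ : Cp F φ (ψ' n) (Q.map (brMap _ _ (hps n) K))) :
      ∃ φ' : F.obj (Q.obj (br (p (n + 1)) K)) ≅ Q.obj (br (p (n + 1)) K),
        Cp F φ' (ψ' (n + 1)) (Q.map (brMap _ _ (hps (n + 1)) K)) ∧
        Cp F φ φ' (Q.map (brMap _ _ (hpp n) K)) := by
    obtain ⟨δ, hδ⟩ := br_triangle (p n) (p (n + 1)) (s (n + 1)) (hpp n) (hps (n + 1))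
      (by intro i; dsimp only [p, s]; lia) (by intro i; dsimp only [p, s]; lia) K
    obtain ⟨δ', hδ'⟩ := br_triangle (fun i => b - n < i ∧ i ≤ b) (p n) (s n)
      (by intro i; dsimp only [p]; lia) (hps n)
      (by intro i; dsimp only [p, s]; lia) (by intro i; dsimp only [p, s]; lia) K
    have hc : Cp F (ψ' (n + 1)) (sh φ 1) δ := by
      refine cp_of_comp_right hδ' hφ ((hψ' (n + 1)).cp (hψ' n) (by push_cast; lia) _) ?_
      intro x
      have := br_isGE (fun i => b - n < i ∧ i ≤ b) (b - n + 1) (by lia) K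
      have := br_isLE (s (n + 1)) (b - n - 1) (by intro i; dsimp only [s]; lia) K
      have := TStructure.t.isGE_shift (Q.obj (br (fun i => b - n < i ∧ i ≤ b) K))
        (b - n + 1) 1 (b - n)
      exact TStructure.t.zero x (b - n - 1) (b - n)
    obtain ⟨φ', h₁, h₂⟩ := cp_dist₂ hδ hc
    exact ⟨φ', h₂, h₁⟩
  have hb0 : BrRel (· = b) (p 0) := by intro i; dsimp only [p]; lia
  have : IsIso (brMap _ _ hb0 K) :=
    have (i : ℤ) : IsIso ((brMap _ _ hb0 K).f i) :=
      isIso_brMap_f _ _ _ K i (by dsimp only [p]; lia)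
    HomologicalComplex.Hom.isIso_of_components _
  let e := Q.mapIso (asIso (brMap _ _ hb0 K))
  have he : Cp F ψ (conj ψ e.symm) e.hom := Cp.symm (f := e.symm) (cp_conj ψ e.symm)
  have hψ₀ : Good η b (ψ' 0) := by simpa using hψ' 0
  obtain ⟨φ, hφ₀, hφ⟩ := exists_seq
    (α := fun n => { φ : F.obj (Q.obj (br (p n) K)) ≅ Q.obj (br (p n) K) //
      Cp F φ (ψ' n) (Q.map (brMap _ _ (hps n) K)) })
    (fun n φ φ' => Cp F φ.1 φ'.1 (Q.map (brMap _ _ (hpp n) K)))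
    ⟨conj ψ e.symm, Cp.of_comp_left he (hψ.cp₀ hψ₀ _)⟩
    (fun n φ => by
      obtain ⟨φ', h₁, h₂⟩ := step n φ.1 φ.2
      exact ⟨⟨φ', h₁⟩, h₂⟩)
  have H := isHocolim_Q hC (fun n => br (p n) K) (fun n => brMap _ _ (hpp n) K) (br (· ≤ b) K)
    (fun n => brMap _ _ (hpb n) K)
    (fun n => brMap_comp _ _ _ _ _ _ _ (by intro i; dsimp only [p]; lia))
    (fun i => ⟨(b - i).toNat, fun n hn => isIso_brMap_f _ _ _ K i (by dsimp only [p]; lia)⟩)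
  obtain ⟨χ, hχ⟩ := IsHocolim.exists_iso (H.map F) H (fun n => (φ n).1) hφ
  refine ⟨χ, ?_⟩
  have h₀ := hχ 0
  rw [hφ₀] at h₀
  have := he.comp h₀
  rwa [Functor.mapIso_hom, asIso_hom, ← Q.map_comp,
    brMap_comp _ _ _ _ _ _ _ (by intro i; dsimp only [p]; lia)] at this

/-- Every complex satisfies `F X ≅ X`. Starting from `br (· ≤ 0) K`, the stalks in degrees
`1`, `2`, … are attached one at a time, keeping compatibility with the inclusion of the top stalk,
and the homotopy limit is taken. -/
lemma br_iso (η : singleFunctor C 0 ⋙ F ≅ singleFunctor C 0)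
    (hC : CoprodMono C) [HasColimitsOfShape (Discrete ℕ) C]
    (hC' : CoprodMono Cᵒᵖ) [HasLimitsOfShape (Discrete ℕ) C]
    [PreservesColimitsOfShape (Discrete ℕ) F] [PreservesLimitsOfShape (Discrete ℕ) F]
    (K : CochainComplex C ℤ) : Nonempty (F.obj (Q.obj K) ≅ Q.obj K) := by
  let p (n : ℕ) (i : ℤ) : Prop := i ≤ n
  let s (n : ℕ) (i : ℤ) : Prop := i = n
  have hsp (n : ℕ) : BrRel (s n) (p n) := by intro i; dsimp only [p, s]; lia
  have hpp (n : ℕ) : BrRel (p (n + 1)) (p n) := by intro i; dsimp only [p, s]; lia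
  have hpt (n : ℕ) : BrRel (fun _ => True) (p n) := by intro i; dsimp only [p, s]; lia
  have hex (n : ℕ) : ∃ ψ' : F.obj (Q.obj (br (s n) K)) ≅ Q.obj (br (s n) K),
    Good η n ψ' := exists_good_br η n K
  choose ψ hψ using hex
  have step (n : ℕ) (φ : F.obj (Q.obj (br (p n) K)) ≅ Q.obj (br (p n) K))
      (hφ : Cp F (ψ n) φ (Q.map (brMap _ _ (hsp n) K))) :
      ∃ φ' : F.obj (Q.obj (br (p (n + 1)) K)) ≅ Q.obj (br (p (n + 1)) K),
        Cp F (ψ (n + 1)) φ' (Q.map (brMap _ _ (hsp (n + 1)) K)) ∧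
        Cp F φ' φ (Q.map (brMap _ _ (hpp n) K)) := by
    obtain ⟨δ, hδ⟩ := br_triangle (s (n + 1)) (p (n + 1)) (p n) (hsp (n + 1)) (hpp n)
      (by intro i; dsimp only [p, s]; lia) (by intro i; dsimp only [p, s]; lia) K
    obtain ⟨δ', hδ'⟩ := br_triangle (s n) (p n) (· ≤ (n - 1 : ℤ)) (hsp n)
      (by intro i; dsimp only [p]; lia)
      (by intro i; dsimp only [p, s]; lia) (by intro i; dsimp only [p, s]; lia) K
    have hc : Cp F φ (sh (ψ (n + 1)) 1) δ := by
      refine cp_of_comp_left hδ' hφ ((hψ n).cp (hψ (n + 1)) (by push_cast; lia) _) ?_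
      intro x
      -- the source of `x` is `F` of an object of `D^{≤ n - 1}`, which by `br_iso_le` is again an
      -- object of `D^{≤ n - 1}`
      obtain ⟨ψ', hψ'⟩ := exists_good_br η (n - 1 : ℤ) K
      obtain ⟨e, -⟩ := br_iso_le η hC (n - 1 : ℤ) K ψ' hψ'
      have := br_isGE (s (n + 1)) (n + 1) (by intro i; dsimp only [s]; lia) K
      have := br_isLE (· ≤ (n - 1 : ℤ)) (n - 1 : ℤ) (by lia) K
      have := TStructure.t.isGE_shift (Q.obj (br (s (n + 1)) K)) (n + 1) 1 n
      have : e.inv ≫ x = 0 := TStructure.t.zero _ (n - 1 : ℤ) n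
      rw [← cancel_epi e.inv, this, comp_zero]
    exact cp_dist₂ hδ hc
  obtain ⟨φ₀, hφ₀⟩ := br_iso_le η hC ((0 : ℕ) : ℤ) K (ψ 0) (hψ 0)
  obtain ⟨φ, -, hφ⟩ := exists_seq
    (α := fun n => { φ : F.obj (Q.obj (br (p n) K)) ≅ Q.obj (br (p n) K) //
      Cp F (ψ n) φ (Q.map (brMap _ _ (hsp n) K)) })
    (fun n φ φ' => Cp F φ'.1 φ.1 (Q.map (brMap _ _ (hpp n) K)))
    ⟨φ₀, hφ₀⟩
    (fun n φ => by
      obtain ⟨φ', h₁, h₂⟩ := step n φ.1 φ.2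
      exact ⟨⟨φ', h₁⟩, h₂⟩)
  have H := isHolim_Q hC' (fun n => br (p n) K) (fun n => brMap _ _ (hpp n) K)
    (br (fun _ => True) K) (fun n => brMap _ _ (hpt n) K)
    (fun n => brMap_comp _ _ _ _ _ _ _ (by intro i; dsimp only [p]; lia))
    (fun i => ⟨i.toNat, fun n hn => isIso_brMap_f _ _ _ K i (by dsimp only [p]; lia)⟩)
  obtain ⟨χ, -⟩ := IsHolim.exists_iso (H.map F) H (fun n => (φ n).1) hφ
  exact ⟨conj χ (Q.mapIso (brTrueIso (fun _ => True) (fun _ => trivial) K).symm)⟩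

lemma nonempty_iso (η : singleFunctor C 0 ⋙ F ≅ singleFunctor C 0)
    (hC : CoprodMono C) [HasColimitsOfShape (Discrete ℕ) C]
    (hC' : CoprodMono Cᵒᵖ) [HasLimitsOfShape (Discrete ℕ) C]
    [PreservesColimitsOfShape (Discrete ℕ) F] [PreservesLimitsOfShape (Discrete ℕ) F]
    (X : DerivedCategory C) : Nonempty (F.obj X ≅ X) := by
  obtain ⟨e⟩ := br_iso η hC hC' (Q.objPreimage X)
  exact ⟨conj e (Q.objObjPreimageIso X).symm⟩

end towers

/-! ### Bijectivity of `F` on morphisms, and dévissage -/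

section ff

variable {T : Type u} [Category.{v} T]

/-- `F` is bijective on morphisms from `X` to `Y`. -/
def FF (F : T ⥤ T) (X Y : T) : Prop :=
  Function.Bijective (fun f : X ⟶ Y => F.map f)

variable {F : T ⥤ T}

lemma FF.of_iso {X Y X' Y' : T} (h : FF F X Y) (i : X ≅ X') (j : Y ≅ Y') : FF F X' Y' := by
  constructor
  · intro f g hfg
    have : F.map (i.hom ≫ f ≫ j.inv) = F.map (i.hom ≫ g ≫ j.inv) := by
      simp only [F.map_comp] at hfg ⊢
      rw [hfg]
    simpa using h.1 this
  · intro f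
    obtain ⟨g, hg⟩ := h.2 (F.map i.hom ≫ f ≫ F.map j.inv)
    refine ⟨i.inv ≫ g ≫ j.hom, ?_⟩
    dsimp at hg ⊢
    simp only [F.map_comp, hg, assoc]
    simp only [← F.map_comp, ← F.map_comp_assoc]
    simp

lemma FF.of_isLimit {X P : T} {Y : ℕ → T} {π : ∀ n, P ⟶ Y n} (hP : IsLimit (Fan.mk P π))
    [PreservesLimitsOfShape (Discrete ℕ) F] (h : ∀ n, FF F X (Y n)) : FF F X P := by
  constructor
  · intro f g hfg
    refine Fan.IsLimit.hom_ext hP _ _ (fun n => (h n).1 ?_)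
    have : F.map f = F.map g := hfg
    change F.map (f ≫ π n) = F.map (g ≫ π n)
    rw [F.map_comp, F.map_comp, this]
  · intro f
    have hg (n : ℕ) : ∃ g : X ⟶ Y n, F.map g = f ≫ F.map (π n) := (h n).2 _
    choose g hg using hg
    refine ⟨Fan.IsLimit.lift hP g, ?_⟩
    refine Fan.IsLimit.hom_ext (isLimitFanMkObjOfIsLimit F _ _ hP) _ _ (fun n => ?_)
    change F.map _ ≫ F.map (π n) = f ≫ F.map (π n)
    rw [← F.map_comp, ← hg]
    exact congrArg F.map (Fan.IsLimit.fac hP g n)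

lemma FF.of_isColimit {X P : T} {Y : ℕ → T} {ι : ∀ n, Y n ⟶ P} (hP : IsColimit (Cofan.mk P ι))
    [PreservesColimitsOfShape (Discrete ℕ) F] (h : ∀ n, FF F (Y n) X) : FF F P X := by
  constructor
  · intro f g hfg
    refine Cofan.IsColimit.hom_ext hP _ _ (fun n => (h n).1 ?_)
    have : F.map f = F.map g := hfg
    change F.map (ι n ≫ f) = F.map (ι n ≫ g)
    rw [F.map_comp, F.map_comp, this]
  · intro f
    have hg (n : ℕ) : ∃ g : Y n ⟶ X, F.map g = F.map (ι n) ≫ f := (h n).2 _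
    choose g hg using hg
    refine ⟨Cofan.IsColimit.desc hP g, ?_⟩
    refine Cofan.IsColimit.hom_ext (isColimitCofanMkObjOfIsColimit F _ _ hP) _ _ (fun n => ?_)
    change F.map (ι n) ≫ F.map _ = F.map (ι n) ≫ f
    rw [← F.map_comp, ← hg]
    exact congrArg F.map (Cofan.IsColimit.fac hP g n)

section
variable [HasShift T ℤ]

/-- `F` is bijective on morphisms between all shifts of `X` and `Y`. -/
def FFs (F : T ⥤ T) (X Y : T) : Prop := ∀ a b : ℤ, FF F (X⟦a⟧) (Y⟦b⟧)

lemma FFs.ff {X Y : T} (h : FFs F X Y) : FF F X Y :=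
  (h 0 0).of_iso ((shiftFunctorZero T ℤ).app X) ((shiftFunctorZero T ℤ).app Y)

lemma FFs.of_iso {X Y X' Y' : T} (h : FFs F X Y) (i : X ≅ X') (j : Y ≅ Y') : FFs F X' Y' :=
  fun a b => (h a b).of_iso ((shiftFunctor T a).mapIso i) ((shiftFunctor T b).mapIso j)

lemma FFs.shift {X Y : T} (h : FFs F X Y) (a b : ℤ) : FFs F (X⟦a⟧) (Y⟦b⟧) := fun c d =>
  (h (a + c) (b + d)).of_iso ((shiftFunctorAdd T a c).app X) ((shiftFunctorAdd T b d).app Y)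

lemma FFs.of_isLimit {X P : T} {Y : ℕ → T} {π : ∀ n, P ⟶ Y n} (hP : IsLimit (Fan.mk P π))
    [PreservesLimitsOfShape (Discrete ℕ) F] (h : ∀ n, FFs F X (Y n)) : FFs F X P := fun a b =>
  FF.of_isLimit (isLimitFanMkObjOfIsLimit (shiftFunctor T b) _ _ hP) (fun n => h n a b)

lemma FFs.of_isColimit {X P : T} {Y : ℕ → T} {ι : ∀ n, Y n ⟶ P} (hP : IsColimit (Cofan.mk P ι))
    [PreservesColimitsOfShape (Discrete ℕ) F] (h : ∀ n, FFs F (Y n) X) : FFs F P X := fun a b =>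
  FF.of_isColimit (isColimitCofanMkObjOfIsColimit (shiftFunctor T a) _ _ hP) (fun n => h n a b)

variable [F.CommShift ℤ]

lemma FF.shift {X Y : T} (h : FF F X Y) (a : ℤ) : FF F (X⟦a⟧) (Y⟦a⟧) := by
  have key (f : X ⟶ Y) : F.map (f⟦a⟧') =
      (F.commShiftIso a).hom.app X ≫ (F.map f)⟦a⟧' ≫ (F.commShiftIso a).inv.app Y := by
    rw [F.commShiftIso_inv_naturality]
    simp
  constructor
  · intro f g hfg
    obtain ⟨f, rfl⟩ := (shiftFunctor T a).map_surjective f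
    obtain ⟨g, rfl⟩ := (shiftFunctor T a).map_surjective g
    have hfg' : F.map (f⟦a⟧') = F.map (g⟦a⟧') := hfg
    rw [key, key, cancel_epi, cancel_mono] at hfg'
    rw [h.1 ((shiftFunctor T a).map_injective hfg')]
  · intro f
    obtain ⟨g, hg⟩ := (shiftFunctor T a).map_surjective
      ((F.commShiftIso a).inv.app X ≫ f ≫ (F.commShiftIso a).hom.app Y)
    obtain ⟨g, rfl⟩ := h.2 g
    refine ⟨g⟦a⟧', ?_⟩
    change F.map (g⟦a⟧') = f
    rw [key]
    dsimp only at hg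
    rw [hg]
    simp

lemma FFs.of_ff {X Y : T} (h : ∀ n : ℤ, FF F X (Y⟦n⟧)) : FFs F X Y := fun a b =>
  ((h (b - a)).shift a).of_iso (Iso.refl _) ((shiftFunctorAdd' T (b - a) a b (by lia)).symm.app Y)

end

variable [HasZeroObject T] [HasShift T ℤ] [Preadditive T]
  [∀ n : ℤ, (shiftFunctor T n).Additive] [Pretriangulated T]
  [F.CommShift ℤ] [F.IsTriangulated]

lemma FF.eq_zero {X Y : T} (h : FF F X Y) {f : X ⟶ Y} (hf : F.map f = 0) : f = 0 :=
  h.1 (hf.trans (F.map_zero _ _).symm)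

lemma exists_inv_dist {X Y Z : T} {f : X ⟶ Y} {g : Y ⟶ Z} {h : Z ⟶ X⟦(1 : ℤ)⟧}
    (hT : Triangle.mk f g h ∈ distTriang T) : ∃ (h' : Z⟦(-1 : ℤ)⟧ ⟶ X) (g' : _),
      Triangle.mk h' f g' ∈ distTriang T :=
  ⟨_, _, inv_rot_of_distTriang _ hT⟩

/-- Bijectivity of `F` on `Hom(X, -)` passes to the middle term of a triangle, by the five lemma. -/
lemma FF.mid {X Y₁ Y₂ Y₃ : T} {f : Y₁ ⟶ Y₂} {g : Y₂ ⟶ Y₃} {h : Y₃ ⟶ Y₁⟦(1 : ℤ)⟧}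
    (hT : Triangle.mk f g h ∈ distTriang T) (h₁ : FF F X Y₁) (h₃ : FF F X Y₃)
    (h₁' : FF F X (Y₁⟦(1 : ℤ)⟧)) (h₃' : FF F X (Y₃⟦(-1 : ℤ)⟧)) : FF F X Y₂ := by
  have hF := map_dist F hT
  obtain ⟨h', g', hT'⟩ := exists_inv_dist hT
  constructor
  · intro β₁ β₂ hβ
    replace hβ : F.map (β₁ - β₂) = 0 := by rw [F.map_sub]; exact sub_eq_zero.2 hβ
    obtain ⟨l, hl⟩ := dist_lift hT (β₁ - β₂) (h₃.eq_zero (by rw [F.map_comp, hβ, zero_comp]))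
    obtain ⟨k, hk⟩ := dist_lift (map_dist F hT') (F.map l) (by rw [← F.map_comp, hl, hβ])
    obtain ⟨k, rfl⟩ := h₃'.2 k
    obtain rfl : k ≫ h' = l := h₁.1 ((F.map_comp _ _).trans hk)
    rw [← sub_eq_zero, ← hl, assoc, dist_zero₁₂ hT', comp_zero]
  · intro β
    obtain ⟨γ, hγ⟩ := h₃.2 (β ≫ F.map g)
    replace hγ : F.map γ = β ≫ F.map g := hγ
    obtain ⟨l, rfl⟩ := dist_lift₃ hT γ (h₁'.eq_zero (by
      rw [F.map_comp, hγ, assoc, ← F.map_comp, dist_zero₂₃ hT, F.map_zero, comp_zero]))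
    obtain ⟨m, hm⟩ := dist_lift hF (β - F.map l) (by
      rw [Preadditive.sub_comp, ← hγ, F.map_comp, sub_self])
    obtain ⟨m, rfl⟩ := h₁.2 m
    refine ⟨l + m ≫ f, ?_⟩
    change F.map _ = β
    rw [F.map_add, F.map_comp, hm]
    abel

/-- Bijectivity of `F` on `Hom(-, Y)` passes to the middle term of a triangle, by the five lemma. -/
lemma FF.mid' {Y X₁ X₂ X₃ : T} {f : X₁ ⟶ X₂} {g : X₂ ⟶ X₃} {h : X₃ ⟶ X₁⟦(1 : ℤ)⟧}
    (hT : Triangle.mk f g h ∈ distTriang T) (h₁ : FF F X₁ Y) (h₃ : FF F X₃ Y)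
    (h₁' : FF F (X₁⟦(1 : ℤ)⟧) Y) (h₃' : FF F (X₃⟦(-1 : ℤ)⟧) Y) : FF F X₂ Y := by
  have hF := map_dist F hT
  obtain ⟨h', g', hT'⟩ := exists_inv_dist hT
  constructor
  · intro β₁ β₂ hβ
    replace hβ : F.map (β₁ - β₂) = 0 := by rw [F.map_sub]; exact sub_eq_zero.2 hβ
    obtain ⟨l, hl⟩ := dist_desc hT (β₁ - β₂) (h₁.eq_zero (by rw [F.map_comp, hβ, comp_zero]))
    obtain ⟨k, hk⟩ := dist_desc₃ hF (F.map l) (by rw [← F.map_comp, hl, hβ])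
    obtain ⟨k', hk'⟩ := h₁'.2 ((F.commShiftIso (1 : ℤ)).hom.app X₁ ≫ k)
    obtain rfl : h ≫ k' = l := h₃.1 ((F.map_comp _ _).trans (by
      change F.map h ≫ F.map k' = F.map l
      rw [← hk, assoc]
      exact congrArg _ hk'))
    rw [← sub_eq_zero, ← hl, ← assoc, dist_zero₂₃ hT, zero_comp]
  · intro β
    obtain ⟨γ, hγ⟩ := h₁.2 (F.map f ≫ β)
    replace hγ : F.map γ = F.map f ≫ β := hγ
    obtain ⟨l, rfl⟩ := dist_desc hT' γ (h₃'.eq_zero (by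
      rw [F.map_comp, hγ, ← assoc, ← F.map_comp, dist_zero₁₂ hT', F.map_zero, zero_comp]))
    obtain ⟨m, hm⟩ := dist_desc hF (β - F.map l) (by
      rw [Preadditive.comp_sub, ← hγ, F.map_comp, sub_self])
    obtain ⟨m, rfl⟩ := h₃.2 m
    refine ⟨l + g ≫ m, ?_⟩
    change F.map _ = β
    rw [F.map_add, F.map_comp, hm]
    abel

lemma shift_dist {X Y Z : T} {f : X ⟶ Y} {g : Y ⟶ Z} {h : Z ⟶ X⟦(1 : ℤ)⟧}
    (hT : Triangle.mk f g h ∈ distTriang T) (a : ℤ) :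
    ∃ (f' : X⟦a⟧ ⟶ Y⟦a⟧) (g' : Y⟦a⟧ ⟶ Z⟦a⟧) (h' : _), Triangle.mk f' g' h' ∈ distTriang T :=
  ⟨_, _, _, Triangle.shift_distinguished _ hT a⟩

lemma FFs.mid {X Y₁ Y₂ Y₃ : T} {f : Y₁ ⟶ Y₂} {g : Y₂ ⟶ Y₃} {h : Y₃ ⟶ Y₁⟦(1 : ℤ)⟧}
    (hT : Triangle.mk f g h ∈ distTriang T) (h₁ : FFs F X Y₁) (h₃ : FFs F X Y₃) :
    FFs F X Y₂ := fun a b => by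
  obtain ⟨f', g', h', hT'⟩ := shift_dist hT b
  exact FF.mid hT' (h₁ a b) (h₃ a b) (((h₁.shift 0 b) a 1).of_iso
    ((shiftFunctor T a).mapIso ((shiftFunctorZero T ℤ).app X)) (Iso.refl _))
    (((h₃.shift 0 b) a (-1)).of_iso
    ((shiftFunctor T a).mapIso ((shiftFunctorZero T ℤ).app X)) (Iso.refl _))

lemma FFs.mid' {Y X₁ X₂ X₃ : T} {f : X₁ ⟶ X₂} {g : X₂ ⟶ X₃} {h : X₃ ⟶ X₁⟦(1 : ℤ)⟧}
    (hT : Triangle.mk f g h ∈ distTriang T) (h₁ : FFs F X₁ Y) (h₃ : FFs F X₃ Y) :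
    FFs F X₂ Y := fun a b => by
  obtain ⟨f', g', h', hT'⟩ := shift_dist hT a
  exact FF.mid' hT' (h₁ a b) (h₃ a b) (((h₁.shift a 0) 1 b).of_iso (Iso.refl _)
    ((shiftFunctor T b).mapIso ((shiftFunctorZero T ℤ).app Y)))
    (((h₃.shift a 0) (-1) b).of_iso (Iso.refl _)
    ((shiftFunctor T b).mapIso ((shiftFunctorZero T ℤ).app Y)))

lemma FFs.of_isHolim {X : T} {Y : ℕ → T} {t : ∀ n, Y (n + 1) ⟶ Y n} {Z : T} {j : ∀ n, Z ⟶ Y n}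
    (H : IsHolim Y t Z j) [PreservesLimitsOfShape (Discrete ℕ) F] (h : ∀ n, FFs F X (Y n)) :
    FFs F X Z := by
  obtain ⟨P, π, g, f, h, ⟨hP⟩, hT, -, -⟩ := H
  have hP' : FFs F X P := FFs.of_isLimit hP ‹_›
  obtain ⟨h', g', hT'⟩ := exists_inv_dist hT
  exact FFs.mid hT' ((hP'.shift 0 (-1)).of_iso ((shiftFunctorZero T ℤ).app X) (Iso.refl _)) hP'

lemma FFs.of_isHocolim {X : T} {Y : ℕ → T} {t : ∀ n, Y n ⟶ Y (n + 1)} {Z : T} {j : ∀ n, Y n ⟶ Z}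
    (H : IsHocolim Y t Z j) [PreservesColimitsOfShape (Discrete ℕ) F] (h : ∀ n, FFs F (Y n) X) :
    FFs F Z X := by
  obtain ⟨P, π, g, f, h, ⟨hP⟩, hT, -, -⟩ := H
  have hP' : FFs F P X := FFs.of_isColimit hP ‹_›
  exact FFs.mid' (rot_of_distTriang _ hT) hP'
    ((hP'.shift 1 0).of_iso (Iso.refl _) ((shiftFunctorZero T ℤ).app X))

end ff

/-! ### Full faithfulness on stalks -/

section stalkHom

variable {C : Type u} [Category.{v} C]

lemma epi_of_epi_iso_conj {X X' Y Y' : C} (e : X ≅ X') (e' : Y ≅ Y') (p : X' ⟶ Y')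
    (h : Epi (e.hom ≫ p ≫ e'.inv)) : Epi p := by
  have : p = e.inv ≫ (e.hom ≫ p ≫ e'.inv) ≫ e'.hom := by simp
  rw [this]
  infer_instance

variable [Abelian C]

/-- In degree zero, a quasi-isomorphism from a complex in degrees `≤ 0` to a complex with zero
differentials around degree zero is an epimorphism `X.X 0 ⟶ H⁰(X) ≅ H⁰(Y) ≅ Y.X 0`. -/
lemma epi_f_of_quasiIso {X Y : CochainComplex C ℤ} [X.IsStrictlyLE 0] (s : X ⟶ Y) [QuasiIso s]
    (hY : Y.d (-1) 0 = 0) (hY' : Y.d 0 1 = 0) : Epi (s.f 0) := by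
  have h₁ : X.d 0 1 = 0 := (X.isZero_of_isStrictlyLE 0 1 (by lia)).eq_of_tgt _ _
  have : IsIso (X.iCycles 0) := X.isIso_iCycles 0 1 (by simp) h₁
  have : IsIso (Y.iCycles 0) := Y.isIso_iCycles 0 1 (by simp) hY'
  have : IsIso (Y.homologyπ 0) := Y.isIso_homologyπ (-1) 0 (by simp) hY
  have h₂ : HomologicalComplex.cyclesMap s 0 =
      X.homologyπ 0 ≫ HomologicalComplex.homologyMap s 0 ≫ inv (Y.homologyπ 0) := by
    rw [← assoc, IsIso.eq_comp_inv, HomologicalComplex.homologyπ_naturality]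
  have h₃ : s.f 0 = inv (X.iCycles 0) ≫ HomologicalComplex.cyclesMap s 0 ≫ Y.iCycles 0 := by
    rw [IsIso.eq_inv_comp, HomologicalComplex.cyclesMap_i]
  have : Epi (HomologicalComplex.cyclesMap s 0) := by rw [h₂]; infer_instance
  rw [h₃]
  infer_instance

variable [HasDerivedCategory.{w} C]
open DerivedCategory

/-- A map in the derived category from a stalk `M` in degree zero to a complex `L` with `L.X 0 = 0`
is killed by an epimorphism onto `M`: represent it by a roof `M ⟵ X ⟶ L` with `X` in degrees `≤ 0`
and take `X.X 0 ⟶ M`. -/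
lemma exists_epi_comp_eq_zero (M : C) (L : CochainComplex C ℤ) (hL : IsZero (L.X 0))
    (α : (singleFunctor C 0).obj M ⟶ Q.obj L) :
    ∃ (M' : C) (p : M' ⟶ M), Epi p ∧ (singleFunctor C 0).map p ≫ α = 0 := by
  obtain ⟨X, hX, s, hs, g, hg⟩ := right_fac_of_isStrictlyLE
    (X := (CochainComplex.singleFunctor C 0).obj M) (Y := L) α 0
  have hs' := hs
  rw [isIso_Q_map_iff_quasiIso] at hs'
  let q : (CochainComplex.singleFunctor C 0).obj (X.X 0) ⟶ X :=
    HomologicalComplex.mkHomFromSingle (𝟙 (X.X 0)) (fun k hk =>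
      (X.isZero_of_isStrictlyLE 0 k (by
        have : (0 : ℤ) + 1 = k := hk
        lia)).eq_of_tgt _ _)
  obtain ⟨p, hp⟩ := (HomologicalComplex.single C (ComplexShape.up ℤ) 0).map_surjective (q ≫ s)
  have hq : IsIso (q.f 0) := by
    have : q.f 0 = (HomologicalComplex.singleObjXSelf (ComplexShape.up ℤ) 0 (X.X 0)).hom ≫ 𝟙 _ :=
      HomologicalComplex.mkHomFromSingle_f _ _
    exact (this.trans (comp_id _)) ▸ Iso.isIso_hom _
  have hqg : q ≫ g = 0 := HomologicalComplex.from_single_hom_ext (hL.eq_of_tgt _ _)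
  refine ⟨X.X 0, p, ?_, ?_⟩
  · have := epi_f_of_quasiIso s
      ((HomologicalComplex.isZero_single_obj_X (ComplexShape.up ℤ) 0 M (-1) (by simp)).eq_of_src _ _)
      ((HomologicalComplex.isZero_single_obj_X (ComplexShape.up ℤ) 0 M 1 (by simp)).eq_of_tgt _ _)
    have h₁ : ((HomologicalComplex.single C (ComplexShape.up ℤ) 0).map p).f 0 = q.f 0 ≫ s.f 0 := by
      rw [hp]; rfl
    have h₂ := HomologicalComplex.single_map_f_self (c := ComplexShape.up ℤ) 0 p
    rw [h₁] at h₂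
    have h₃ : Epi (q.f 0 ≫ s.f 0) := epi_comp _ _
    rw [h₂] at h₃
    exact epi_of_epi_iso_conj _ _ p h₃
  · have : (singleFunctor C 0).map p = Q.map (q ≫ s) := congrArg Q.map hp
    rw [this, hg]
    refine Eq.trans ?_ ((congrArg Q.map hqg).trans (Q.map_zero _ _))
    refine (congrArg (· ≫ inv (Q.map s) ≫ Q.map g) (Q.map_comp q s)).trans ?_
    refine (assoc _ _ _).trans (Eq.trans ?_ (Q.map_comp q g).symm)
    exact congrArg (Q.map q ≫ ·) (IsIso.hom_inv_id_assoc _ _)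

variable {F : DerivedCategory C ⥤ DerivedCategory C}

lemma ff_single (η : singleFunctor C 0 ⋙ F ≅ singleFunctor C 0) (M N : C) :
    FF F ((singleFunctor C 0).obj M) ((singleFunctor C 0).obj N) := by
  constructor
  · intro f g hfg
    have hf := cp_single η f
    have hg := cp_single η g
    dsimp only [Cp] at hf hg hfg
    rw [hfg, hg, cancel_epi] at hf
    exact hf.symm
  · intro f
    refine ⟨(η.app M).inv ≫ f ≫ (η.app N).hom, ?_⟩
    have := cp_single η ((η.app M).inv ≫ f ≫ (η.app N).hom)
    dsimp only [Cp] at this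
    rw [Iso.hom_inv_id_assoc, cancel_mono] at this
    exact this

lemma ff_of_zero {X Y : DerivedCategory C} (φ : F.obj X ≅ X) (ψ : F.obj Y ≅ Y)
    (h : ∀ f : X ⟶ Y, f = 0) : FF F X Y := by
  constructor
  · intro f g _
    rw [h f, h g]
  · intro f
    refine ⟨φ.inv ≫ f ≫ ψ.hom, ?_⟩
    have h₁ := h (φ.inv ≫ f ≫ ψ.hom)
    have h₂ := h (φ.inv ≫ F.map (φ.inv ≫ f ≫ ψ.hom) ≫ ψ.hom)
    rw [← h₁, cancel_epi, cancel_mono] at h₂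
    exact h₂

variable [F.CommShift ℤ] [F.IsTriangulated]

lemma exists_iso_Q_shift (N : C) (m : ℤ) (hm : m ≠ 0) : ∃ (L : CochainComplex C ℤ)
    (_ : ((singleFunctor C 0).obj N)⟦m⟧ ≅ Q.obj L), IsZero (L.X 0) :=
  ⟨(CochainComplex.singleFunctor C (-m)).obj N,
    ((singleFunctors C).shiftIso m (-m) 0 (by lia)).app N,
    HomologicalComplex.isZero_single_obj_X (ComplexShape.up ℤ) (-m) N 0 (by lia)⟩

/-- `F` is bijective on `Ext^n(M, N)`, by induction on `n`. -/
lemma ff_single_shift (η : singleFunctor C 0 ⋙ F ≅ singleFunctor C 0) (n : ℕ) : ∀ (M N : C),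
    FF F ((singleFunctor C 0).obj M) (((singleFunctor C 0).obj N)⟦(n : ℤ)⟧) := by
  induction n with
  | zero =>
    exact fun M N => (ff_single η M N).of_iso (Iso.refl _)
      ((shiftFunctorZero (DerivedCategory C) ℤ).symm.app _)
  | succ n hn =>
    intro M N
    have hn' (K : C) : FF F (((singleFunctor C 0).obj K)⟦(1 : ℤ)⟧)
        (((singleFunctor C 0).obj N)⟦((n + 1 : ℕ) : ℤ)⟧) :=
      ((hn K N).shift 1).of_iso (Iso.refl _)
        ((shiftFunctorAdd' _ (n : ℤ) 1 ((n + 1 : ℕ) : ℤ) (by simp)).symm.app _)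
    obtain ⟨L, e, hL⟩ := exists_iso_Q_shift N ((n + 1 : ℕ) : ℤ) (by lia)
    -- a class in `Ext^{n+1}(M, N)` is effaced by some epimorphism `p : M' ⟶ M`, with kernel `K`
    have kill (α : (singleFunctor C 0).obj M ⟶ ((singleFunctor C 0).obj N)⟦((n + 1 : ℕ) : ℤ)⟧) :
        ∃ (M' K : C) (p : M' ⟶ M) (i : K ⟶ M')
          (d : (singleFunctor C 0).obj M ⟶ ((singleFunctor C 0).obj K)⟦(1 : ℤ)⟧),
          Triangle.mk ((singleFunctor C 0).map i) ((singleFunctor C 0).map p) d ∈ distTriang _ ∧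
            (singleFunctor C 0).map p ≫ α = 0 := by
      obtain ⟨M', p, hp, hα⟩ := exists_epi_comp_eq_zero M L hL (α ≫ e.hom)
      have hS : (ShortComplex.mk (kernel.ι p) p (kernel.condition p)).ShortExact :=
        { exact := ShortComplex.exact_of_f_is_kernel _ (kernelIsKernel p) }
      refine ⟨M', _, p, kernel.ι p, _, hS.singleTriangle_distinguished, ?_⟩
      rwa [← assoc, ← cancel_mono e.inv, assoc, assoc, e.hom_inv_id, comp_id, zero_comp] at hα
    constructor
    · intro α₁ α₂ hα
      replace hα : F.map (α₁ - α₂) = 0 := by rw [F.map_sub]; exact sub_eq_zero.2 hα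
      obtain ⟨M', K, p, i, d, hT, h⟩ := kill (α₁ - α₂)
      obtain ⟨β, hβ⟩ := dist_desc₃ hT _ h
      have hT₂ := rot_of_distTriang _ (rot_of_distTriang _ hT)
      obtain ⟨γ, hγ⟩ := dist_desc (map_dist F hT₂) (F.map β) (by
        exact (F.map_comp _ _).symm.trans ((congrArg F.map hβ).trans hα))
      obtain ⟨γ, rfl⟩ := (hn' M').2 γ
      have hγ' := (hn' K).1 ((F.map_comp _ _).trans hγ)
      rw [← sub_eq_zero, ← hβ, ← hγ']
      exact (assoc _ _ _).symm.trans ((congrArg (· ≫ γ) (dist_zero₁₂ hT₂)).trans zero_comp)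
    · intro α
      let σ := sh (η.app N) ((n + 1 : ℕ) : ℤ)
      obtain ⟨M', K, p, i, d, hT, h⟩ := kill ((η.app M).inv ≫ α ≫ σ.hom)
      have hT₁ := rot_of_distTriang _ hT
      have hα : F.map ((singleFunctor C 0).map p) ≫ α = 0 := by
        have := cp_single η ((singleFunctor C 0).map p)
        dsimp only [Cp] at this
        rw [← cancel_mono σ.hom, zero_comp, assoc]
        have h₂ : α ≫ σ.hom = (η.app M).hom ≫ (η.app M).inv ≫ α ≫ σ.hom := by simp
        rw [h₂, ← assoc, this, assoc, h, comp_zero]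
      obtain ⟨β, hβ⟩ := dist_desc (map_dist F hT₁) α hα
      obtain ⟨β, rfl⟩ := (hn' K).2 β
      exact ⟨d ≫ β, (F.map_comp _ _).trans hβ⟩

/-- In negative degrees there are no morphisms between stalks, before or after applying `F`. -/
lemma ffs_single (η : singleFunctor C 0 ⋙ F ≅ singleFunctor C 0) (M N : C) :
    FFs F ((singleFunctor C 0).obj M) ((singleFunctor C 0).obj N) :=
  FFs.of_ff (fun n => by
    by_cases hn : 0 ≤ n
    · obtain ⟨n, rfl⟩ := Int.eq_ofNat_of_zero_le hn
      exact ff_single_shift η n M N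
    · refine ff_of_zero (η.app M) (sh (η.app N) n) (fun f => ?_)
      have := TStructure.t.isGE_shift ((singleFunctor C 0).obj N) 0 n (-n)
      exact TStructure.t.zero f 0 (-n))

/-- `F` is fully faithful, in all degrees, between objects each concentrated in one degree. -/
lemma ffs_stalk (η : singleFunctor C 0 ⋙ F ≅ singleFunctor C 0) (m m' : ℤ)
    (Z Z' : DerivedCategory C) [Z.IsGE m] [Z.IsLE m] [Z'.IsGE m'] [Z'.IsLE m'] : FFs F Z Z' := by
  obtain ⟨M, ⟨i⟩⟩ := exists_iso_shift m Z
  obtain ⟨M', ⟨i'⟩⟩ := exists_iso_shift m' Z'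
  exact ((ffs_single η M M').shift (-m) (-m')).of_iso i.symm i'.symm

end stalkHom

/-! ### Consequences of AB4 and AB4* -/

section ab4

variable {C : Type u} [Category.{v} C]

lemma hasColimitsOfShape_nat [HasCoproducts.{v} C] : HasColimitsOfShape (Discrete ℕ) C :=
  hasColimitsOfShape_of_equivalence (Discrete.equivalence (Equiv.ulift.{v} (α := ℕ)))

lemma hasLimitsOfShape_nat [HasProducts.{v} C] : HasLimitsOfShape (Discrete ℕ) C :=
  hasLimitsOfShape_of_equivalence (Discrete.equivalence (Equiv.ulift.{v} (α := ℕ)))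

/-- The opposite of a coproduct in the opposite category is a product. -/
def isLimitUnop {X : ℕ → Cᵒᵖ} {P : Cᵒᵖ} {a : ∀ n, X n ⟶ P} (hP : IsColimit (Cofan.mk P a)) :
    IsLimit (Fan.mk P.unop (fun n => (a n).unop)) :=
  Fan.IsLimit.mk _ (fun s => (Cofan.IsColimit.desc hP (fun n => (s.proj n).op)).unop)
    (fun s n => congrArg Quiver.Hom.unop (Cofan.IsColimit.fac hP (fun n => (s.proj n).op) n))
    (fun s m hm => congrArg Quiver.Hom.unop (Cofan.IsColimit.hom_ext hP m.op _ (fun n =>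
      (congrArg Quiver.Hom.op (hm n)).trans
        (Cofan.IsColimit.fac hP (fun n => (s.proj n).op) n).symm)))

variable [Abelian C]

lemma coprodMono_of_AB4 [HasCoproducts.{v} C] [AB4 C] : CoprodMono C := by
  intro X Y f hf P R a b hP hR g hg
  have := hasColimitsOfShape_nat (C := C)
  have : HasExactColimitsOfShape (Discrete ℕ) C :=
    HasExactColimitsOfShape.of_domain_equivalence C
      (Discrete.equivalence (Equiv.ulift.{v} (α := ℕ)))
  have : Mono (Discrete.natTrans (fun n => f n.as) : Discrete.functor X ⟶ Discrete.functor Y) :=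
    have (n : Discrete ℕ) : Mono
      ((Discrete.natTrans (fun n => f n.as) : Discrete.functor X ⟶ Discrete.functor Y).app n) :=
      hf n.as
    NatTrans.mono_of_mono_app _
  exact colim.map_mono' (Discrete.natTrans (fun n => f n.as) :
    Discrete.functor X ⟶ Discrete.functor Y) hP hR g (fun n => hg n.as)

lemma coprodMono_op_of_AB4Star [HasProducts.{v} C] [AB4Star C] : CoprodMono Cᵒᵖ := by
  intro X Y f hf P R a b hP hR g hg
  have := hasLimitsOfShape_nat (C := C)
  have : HasExactLimitsOfShape (Discrete ℕ) C :=
    HasExactLimitsOfShape.of_domain_equivalence C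
      (Discrete.equivalence (Equiv.ulift.{v} (α := ℕ)))
  have : HasColimitsOfShape (Discrete ℕ) Cᵒᵖ :=
    ⟨fun F => hasColimit_of_iso (Discrete.natIsoFunctor (F := F))⟩
  let φ : Discrete.functor (fun n => (Y n).unop) ⟶ Discrete.functor (fun n => (X n).unop) :=
    Discrete.natTrans (fun n => (f n.as).unop)
  have : Epi φ :=
    have (n : Discrete ℕ) : Epi (φ.app n) :=
      have := hf n.as
      inferInstanceAs (Epi (f n.as).unop)
    NatTrans.epi_of_epi_app _
  have h₁ : Epi (lim.map φ) := inferInstance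
  have hP' := isLimitUnop hP
  have hR' := isLimitUnop hR
  let eP := hP'.conePointUniqueUpToIso (limit.isLimit (Discrete.functor (fun n => (X n).unop)))
  let eR := hR'.conePointUniqueUpToIso (limit.isLimit (Discrete.functor (fun n => (Y n).unop)))
  have h₂ : g.unop ≫ eP.hom = eR.hom ≫ lim.map φ := by
    refine limit.hom_ext (fun n => ?_)
    have h₃ : eP.hom ≫ limit.π _ n = (a n.as).unop :=
      IsLimit.conePointUniqueUpToIso_hom_comp hP' (limit.isLimit _) n
    have h₄ : eR.hom ≫ limit.π _ n = (b n.as).unop :=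
      IsLimit.conePointUniqueUpToIso_hom_comp hR' (limit.isLimit _) n
    have h₅ : lim.map φ ≫ limit.π _ n = limit.π _ n ≫ (f n.as).unop := limMap_π φ n
    refine (assoc _ _ _).trans ((congrArg (g.unop ≫ ·) h₃).trans ?_)
    refine Eq.trans ?_ (assoc _ _ _).symm
    refine Eq.trans ?_ (congrArg (eR.hom ≫ ·) h₅).symm
    refine Eq.trans ?_ (assoc _ _ _)
    refine Eq.trans ?_ (congrArg (· ≫ (f n.as).unop) h₄).symm
    exact congrArg Quiver.Hom.unop (hg n.as)
  replace h₂ : g.unop = eR.hom ≫ lim.map φ ≫ eP.inv := by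
    rw [← assoc, Iso.eq_comp_inv]
    exact h₂
  have : Epi g.unop := by
    rw [h₂]
    infer_instance
  exact (inferInstance : Mono g.unop.op)

end ab4

/-! ### Dévissage of the derived category -/

section induction

variable {C : Type u} [Category.{v} C] [Abelian C]

lemma isIso_of_isZero {X Y : C} (hX : IsZero X) (hY : IsZero Y) (f : X ⟶ Y) : IsIso f :=
  ⟨0, hX.eq_of_src _ _, hY.eq_of_src _ _⟩

lemma br_ge_iso (a : ℤ) (K : CochainComplex C ℤ) [K.IsStrictlyGE a] :
    Nonempty (br (a ≤ ·) K ≅ K) := by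
  have h : BrRel (a ≤ ·) (fun _ => True) := by intro i; lia
  have (i : ℤ) : IsIso ((brMap _ _ h K).f i) := by
    by_cases hi : a ≤ i
    · exact isIso_brMap_f _ _ _ K i (by simpa using hi)
    · exact isIso_of_isZero (isZero_onlyIf hi _)
        ((K.isZero_of_isStrictlyGE a i (by lia)).of_iso
          ((HomologicalComplex.eval _ _ i).mapIso (brTrueIso _ (fun _ => trivial) K))) _
  have : IsIso (brMap _ _ h K) := HomologicalComplex.Hom.isIso_of_components _
  exact ⟨asIso (brMap _ _ h K) ≪≫ brTrueIso _ (fun _ => trivial) K⟩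

lemma br_le_iso (b : ℤ) (K : CochainComplex C ℤ) [K.IsStrictlyLE b] :
    Nonempty (br (· ≤ b) K ≅ K) := by
  have h : BrRel (fun _ => True) (· ≤ b) := by intro i; lia
  have (i : ℤ) : IsIso ((brMap _ _ h K).f i) := by
    by_cases hi : i ≤ b
    · exact isIso_brMap_f _ _ _ K i (by simpa using hi)
    · exact isIso_of_isZero ((K.isZero_of_isStrictlyLE b i (by lia)).of_iso
          ((HomologicalComplex.eval _ _ i).mapIso (brTrueIso _ (fun _ => trivial) K)))
            (isZero_onlyIf hi _) _
  have : IsIso (brMap _ _ h K) := HomologicalComplex.Hom.isIso_of_components _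
  exact ⟨(asIso (brMap _ _ h K)).symm ≪≫ brTrueIso _ (fun _ => trivial) K⟩

variable [HasDerivedCategory.{w} C]
open DerivedCategory

/-- A property closed under isomorphisms, extensions and sequential homotopy limits which holds for
the objects concentrated in one degree holds for all objects: a bounded below complex is the
homotopy limit of its bounded brutal truncations, and a general one of its truncations `τ^{≥ -n}`. -/
lemma induction_holim (hC : CoprodMono Cᵒᵖ) [HasLimitsOfShape (Discrete ℕ) C]
    (P : DerivedCategory C → Prop) (hiso : ∀ {X Y : DerivedCategory C}, (X ≅ Y) → P X → P Y)
    (hstalk : ∀ (m : ℤ) (Z : DerivedCategory C) [Z.IsGE m] [Z.IsLE m], P Z)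
    (htri : ∀ {X Y Z : DerivedCategory C} {f : X ⟶ Y} {g : Y ⟶ Z} {h : Z ⟶ X⟦(1 : ℤ)⟧},
      Triangle.mk f g h ∈ distTriang _ → P X → P Z → P Y)
    (hholim : ∀ {Y : ℕ → DerivedCategory C} {t : ∀ n, Y (n + 1) ⟶ Y n} {X : DerivedCategory C}
      {j : ∀ n, X ⟶ Y n}, IsHolim Y t X j → (∀ n, P (Y n)) → P X)
    (X : DerivedCategory C) : P X := by
  have key (a : ℤ) (K : CochainComplex C ℤ) [K.IsStrictlyGE a] : P (Q.obj K) := by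
    let p (n : ℕ) (i : ℤ) : Prop := a ≤ i ∧ i < a + n
    let s (n : ℕ) (i : ℤ) : Prop := i = a + n
    have hsp (n : ℕ) : BrRel (s n) (p (n + 1)) := by intro i; dsimp only [p, s]; lia
    have hpp (n : ℕ) : BrRel (p (n + 1)) (p n) := by intro i; dsimp only [p]; lia
    have hpt (n : ℕ) : BrRel (a ≤ ·) (p n) := by intro i; dsimp only [p]; lia
    have hP (n : ℕ) : P (Q.obj (br (p n) K)) := by
      induction n with
      | zero =>
        have := br_isGE (p 0) 0 (by intro i; dsimp only [p]; lia) K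
        have := br_isLE (p 0) 0 (by intro i; dsimp only [p]; lia) K
        exact hstalk 0 _
      | succ n hn =>
        obtain ⟨δ, hδ⟩ := br_triangle (s n) (p (n + 1)) (p n) (hsp n) (hpp n)
          (by intro i; dsimp only [p, s]; lia) (by intro i; dsimp only [p, s]; lia) K
        have := br_isGE (s n) (a + n) (by intro i; dsimp only [s]; lia) K
        have := br_isLE (s n) (a + n) (by intro i; dsimp only [s]; lia) K
        exact htri hδ (hstalk (a + n) _) hn
    have H := isHolim_Q hC (fun n => br (p n) K) (fun n => brMap _ _ (hpp n) K)
      (br (a ≤ ·) K) (fun n => brMap _ _ (hpt n) K)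
      (fun n => brMap_comp _ _ _ _ _ _ _ (by intro i; dsimp only [p]; lia))
      (fun i => ⟨(i - a + 1).toNat, fun n hn => isIso_brMap_f _ _ _ K i (by dsimp only [p]; lia)⟩)
    obtain ⟨e⟩ := br_ge_iso a K
    exact hiso (Q.mapIso e) (hholim H hP)
  obtain ⟨Y, t, j, H, hY⟩ := exists_holim_truncGE hC (Q.objPreimage X)
  exact hiso (Q.objObjPreimageIso X) (hholim H (fun n =>
    have := hY n
    key (-n) (Y n)))

/-- A property closed under isomorphisms, extensions and sequential homotopy colimits which holds
for the objects concentrated in one degree holds for all objects. -/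
lemma induction_hocolim (hC : CoprodMono C) [HasColimitsOfShape (Discrete ℕ) C]
    (P : DerivedCategory C → Prop) (hiso : ∀ {X Y : DerivedCategory C}, (X ≅ Y) → P X → P Y)
    (hstalk : ∀ (m : ℤ) (Z : DerivedCategory C) [Z.IsGE m] [Z.IsLE m], P Z)
    (htri : ∀ {X Y Z : DerivedCategory C} {f : X ⟶ Y} {g : Y ⟶ Z} {h : Z ⟶ X⟦(1 : ℤ)⟧},
      Triangle.mk f g h ∈ distTriang _ → P X → P Z → P Y)
    (hhocolim : ∀ {Y : ℕ → DerivedCategory C} {t : ∀ n, Y n ⟶ Y (n + 1)} {X : DerivedCategory C}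
      {j : ∀ n, Y n ⟶ X}, IsHocolim Y t X j → (∀ n, P (Y n)) → P X)
    (X : DerivedCategory C) : P X := by
  have key (b : ℤ) (K : CochainComplex C ℤ) [K.IsStrictlyLE b] : P (Q.obj K) := by
    let p (n : ℕ) (i : ℤ) : Prop := b - n < i ∧ i ≤ b
    let s (n : ℕ) (i : ℤ) : Prop := i = b - n
    have hps (n : ℕ) : BrRel (p (n + 1)) (s n) := by intro i; dsimp only [p, s]; lia
    have hpp (n : ℕ) : BrRel (p n) (p (n + 1)) := by intro i; dsimp only [p]; lia
    have hpt (n : ℕ) : BrRel (p n) (· ≤ b) := by intro i; dsimp only [p]; lia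
    have hP (n : ℕ) : P (Q.obj (br (p n) K)) := by
      induction n with
      | zero =>
        have := br_isGE (p 0) 0 (by intro i; dsimp only [p]; lia) K
        have := br_isLE (p 0) 0 (by intro i; dsimp only [p]; lia) K
        exact hstalk 0 _
      | succ n hn =>
        obtain ⟨δ, hδ⟩ := br_triangle (p n) (p (n + 1)) (s n) (hpp n) (hps n)
          (by intro i; dsimp only [p, s]; lia) (by intro i; dsimp only [p, s]; lia) K
        have := br_isGE (s n) (b - n) (by intro i; dsimp only [s]; lia) K
        have := br_isLE (s n) (b - n) (by intro i; dsimp only [s]; lia) K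
        exact htri hδ hn (hstalk (b - n) _)
    have H := isHocolim_Q hC (fun n => br (p n) K) (fun n => brMap _ _ (hpp n) K)
      (br (· ≤ b) K) (fun n => brMap _ _ (hpt n) K)
      (fun n => brMap_comp _ _ _ _ _ _ _ (by intro i; dsimp only [p]; lia))
      (fun i => ⟨(b - i + 1).toNat, fun n hn => isIso_brMap_f _ _ _ K i (by dsimp only [p]; lia)⟩)
    obtain ⟨e⟩ := br_le_iso b K
    exact hiso (Q.mapIso e) (hhocolim H hP)
  obtain ⟨Y, t, j, H, hY⟩ := exists_hocolim_truncLE hC (Q.objPreimage X)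
  exact hiso (Q.objObjPreimageIso X) (hhocolim H (fun n =>
    have := hY n
    key n (Y n)))

end induction

/-! ### `F` is an equivalence -/

section equivalence

variable {C : Type u} [Category.{v} C] [Abelian C] [HasDerivedCategory.{w} C]
open DerivedCategory

variable {F : DerivedCategory C ⥤ DerivedCategory C} [F.CommShift ℤ] [F.IsTriangulated]

/-- Full faithfulness in all degrees, extended from stalks first in the target, then in the source. -/
lemma ffs_all (η : singleFunctor C 0 ⋙ F ≅ singleFunctor C 0)
    (hC : CoprodMono C) [HasColimitsOfShape (Discrete ℕ) C]
    (hC' : CoprodMono Cᵒᵖ) [HasLimitsOfShape (Discrete ℕ) C]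
    [PreservesColimitsOfShape (Discrete ℕ) F] [PreservesLimitsOfShape (Discrete ℕ) F]
    (X Y : DerivedCategory C) : FFs F X Y := by
  have h (m : ℤ) (Z : DerivedCategory C) [Z.IsGE m] [Z.IsLE m] (Y : DerivedCategory C) :
      FFs F Z Y :=
    induction_holim hC' (fun Y => FFs F Z Y) (fun e h => h.of_iso (Iso.refl _) e)
      (fun m' Z' _ _ => ffs_stalk η m m' Z Z') FFs.mid
      (fun H h => FFs.of_isHolim H h) Y
  exact induction_hocolim hC (fun X => FFs F X Y) (fun e h => h.of_iso e (Iso.refl _))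
    (fun m Z _ _ => h m Z Y) FFs.mid' (fun H h => FFs.of_isHocolim H h) X

lemma isEquivalence (η : singleFunctor C 0 ⋙ F ≅ singleFunctor C 0)
    (hC : CoprodMono C) [HasColimitsOfShape (Discrete ℕ) C]
    (hC' : CoprodMono Cᵒᵖ) [HasLimitsOfShape (Discrete ℕ) C]
    [PreservesColimitsOfShape (Discrete ℕ) F] [PreservesLimitsOfShape (Discrete ℕ) F] :
    F.IsEquivalence where
  faithful := ⟨fun {X Y} _ _ h => (ffs_all η hC hC' X Y).ff.1 h⟩
  full := ⟨fun {X Y} => (ffs_all η hC hC' X Y).ff.2⟩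
  essSurj := ⟨fun X => ⟨X, nonempty_iso η hC hC' X⟩⟩

end equivalence

/-! ### A choice of isomorphisms natural on the core -/

section core

variable {C : Type u} [Category.{v} C] [Abelian C] [HasDerivedCategory.{w} C]
open DerivedCategory

variable {F : DerivedCategory C ⥤ DerivedCategory C} [F.CommShift ℤ]

/-- Isomorphisms `F X ≅ X` can be chosen for all `X` so as to be natural on the core. -/
lemma exists_core_iso (η : singleFunctor C 0 ⋙ F ≅ singleFunctor C 0)
    (h : ∀ X, Nonempty (F.obj X ≅ X)) :
    ∃ φ : ∀ X, F.obj X ≅ X, ∀ (X Y : DerivedCategory C) [X.IsGE 0] [X.IsLE 0] [Y.IsGE 0] [Y.IsLE 0]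
      (f : X ⟶ Y), Cp F (φ X) (φ Y) f := by
  have h' (X : DerivedCategory C) : ∃ φ : F.obj X ≅ X, ∀ [X.IsGE 0] [X.IsLE 0], Good η 0 φ := by
    by_cases hX : X.IsGE 0 ∧ X.IsLE 0
    · obtain ⟨_, _⟩ := hX
      obtain ⟨φ, hφ⟩ := exists_good η 0 X
      exact ⟨φ, hφ⟩
    · obtain ⟨φ⟩ := h X
      exact ⟨φ, fun {h₁ h₂} => (hX ⟨h₁, h₂⟩).elim⟩
  choose φ hφ using h'
  exact ⟨φ, fun X Y _ _ _ _ f => (hφ X).cp₀ (hφ Y) f⟩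

end core

end PseudoId

/-- Proposition 6.4: let `A` be an abelian category with arbitrary
coproducts and products such that coproducts and products of exact sequences are exact
(AB4 and AB4*), and let `F : D(A) → D(A)` be a bi-continuous triangle endofunctor which
sends objects of `A` (viewed as stalk complexes in degree zero) into `A` and whose
restriction to `A` is isomorphic to the identity functor.  If either (1) `A` has enough
projectives or enough injectives and finite global dimension (Ext groups being Hom
groups between shifted stalk complexes in `D(A)`), or (2) `F` is an autoequivalence,
then `F` is isomorphic, as a triangle functor, to a pseudo-identity on `D(A)` with
respect to the canonical pre-weight structure. -/
theorem derivedCategory_isoPseudoIdentity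
    [HasCoproducts.{v₂} A] [HasProducts.{v₂} A] [AB4 A] [AB4Star A]
    (F : DerivedCategory A ⥤ DerivedCategory A)
    [F.CommShift ℤ] [F.IsTriangulated]
    [∀ J : Type w, PreservesColimitsOfShape (Discrete J) F]
    [∀ J : Type w, PreservesLimitsOfShape (Discrete J) F]
    (hobj : ∀ M : A, ∃ N : A,
      Nonempty (F.obj ((DerivedCategory.singleFunctor A 0).obj M) ≅
        (DerivedCategory.singleFunctor A 0).obj N))
    (hres : Nonempty (DerivedCategory.singleFunctor A 0 ⋙ F ≅
      DerivedCategory.singleFunctor A 0))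
    (hcases :
      ((EnoughProjectives A ∨ EnoughInjectives A) ∧
        ∃ d : ℕ, ∀ (M N : A) (n : ℕ), d < n →
          ∀ f : (DerivedCategory.singleFunctor A 0).obj M ⟶
            ((DerivedCategory.singleFunctor A 0).obj N)⟦(n : ℤ)⟧, f = 0) ∨
      F.IsEquivalence) :
    ∃ (G : DerivedCategory A ⥤ DerivedCategory A)
      (csG : G.CommShift ℤ) (e : F ≅ G),
      letI : G.CommShift ℤ := csG
      G.IsTriangulated ∧ IsPseudoIdentity (Dge A) (Dle A) G ∧
        NatTrans.CommShift e.hom ℤ := by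
  obtain ⟨η⟩ := hres
  have := PseudoId.hasColimitsOfShape_nat (C := A)
  have := PseudoId.hasLimitsOfShape_nat (C := A)
  have hC := PseudoId.coprodMono_of_AB4 (C := A)
  have hC' := PseudoId.coprodMono_op_of_AB4Star (C := A)
  have : PreservesColimitsOfShape (Discrete ℕ) F :=
    preservesColimitsOfShape_of_equiv (Discrete.equivalence (Equiv.ulift.{w} (α := ℕ))) F
  have : PreservesLimitsOfShape (Discrete ℕ) F :=
    preservesLimitsOfShape_of_equiv (Discrete.equivalence (Equiv.ulift.{w} (α := ℕ))) F
  have hF : F.IsEquivalence := PseudoId.isEquivalence η hC hC'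
  obtain ⟨φ, hφ⟩ := PseudoId.exists_core_iso η (PseudoId.nonempty_iso η hC hC')
  let e : F ≅ F.copyObj (fun X => X) φ := F.isoCopyObj (fun X => X) φ
  -- `F.copyObj` transports `F` along `φ`: it is the identity on objects by definition
  letI : (F.copyObj (fun X => X) φ).CommShift ℤ := Functor.CommShift.ofIso e ℤ
  have he : NatTrans.CommShift e.hom ℤ := Functor.CommShift.ofIso_compatibility e ℤ
  refine ⟨F.copyObj (fun X => X) φ, inferInstance, e, Functor.isTriangulated_of_iso e, ?_, he⟩
  refine ⟨Functor.isEquivalence_of_iso e, fun _ => rfl, fun X Y hX hY f => ?_⟩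
  have hge (Z : DerivedCategory A) (hZ : Z ∈ Dge A) : Z.IsGE 0 := by
    obtain ⟨K, hK, ⟨i⟩⟩ := hZ
    exact ⟨K, i, (CochainComplex.isStrictlyGE_iff K 0).2 hK⟩
  have hle (Z : DerivedCategory A) (hZ : Z ∈ Dle A) : Z.IsLE 0 := by
    obtain ⟨K, hK, ⟨i⟩⟩ := hZ
    exact ⟨K, i, (CochainComplex.isStrictlyLE_iff K 0).2 hK⟩
  have := hge X hX.1
  have := hle X hX.2
  have := hge Y hY.1
  have := hle Y hY.2
  have h : F.map f ≫ (φ Y).hom = (φ X).hom ≫ f := hφ X Y f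
  change (φ X).inv ≫ F.map f ≫ (φ Y).hom = 𝟙 X ≫ f ≫ 𝟙 Y
  rw [h, Iso.inv_hom_id_assoc, id_comp, comp_id]
end

section
/- Let F, G : A → B be two additive functors between additive categories and let C be a full subcategory of A. Assume that for each object A of A there is a special isomorphism ξ_A : A → ∐_{i∈I} C_i with respect to (C; F, G), meaning: all C_i belong to C, and (S1) both the coproduct ∐_{i∈I} C_i and the product ∏_{i∈I} C_i exist in A and the canonical morphism ∐_{i∈I} C_i → ∏_{i∈I} C_i is an isomorphism; (S2) the coproducts ∐_{i∈I} F(C_i) and ∐_{i∈I} G(C_i) exist in B and the canonical morphisms ∐_{i∈I} F(C_i) → F(∐_{i∈I} C_i) and ∐_{i∈I} G(C_i) → G(∐_{i∈I} C_i) are isomorphisms; (S3) the products ∏_{i∈I} F(C_i) and ∏_{i∈I} G(C_i) exist in B and the canonical morphisms F(∏_{i∈I} C_i) → ∏_{i∈I} F(C_i) and G(∏_{i∈I} C_i) → ∏_{i∈I} G(C_i) are isomorphisms. Then every natural transformation η : F|_C → G|_C extends to a unique natural transformation η' : F → G (i.e., η'_C = η_C for all objects C of C); moreover, if η is a natural isomorphism,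 then so is η'. -/
/-!
If `X ≅ ∐ c ≅ ∏ c`, write `ι i : c i ⟶ X` and `π j : X ⟶ c j` for the inclusions and projections.
Preservation of the coproduct makes the `F.map (ι i)` a coproduct cocone, and preservation of the
product makes the `G.map (π j)` jointly monic. Any extension of `η` must satisfy
`F.map (ι i) ≫ η'.app X = η (c i) ≫ G.map (ι i)`, which determines `η'.app X` and serves as its
definition. Naturality of `η` along `ι i ≫ π j` gives the dual formula
`η'.app X ≫ G.map (π j) = F.map (π j) ≫ η (c j)`. For `f : X ⟶ Y`, the naturality square of `η'`
is then tested against the `F.map (ι i)` and the `G.map (π j)`, where it becomes naturality of `η`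
along `ι i ≫ f ≫ π j`, a morphism between objects of `C`. If `η` is invertible, the inverse of
`η'.app X` is defined on the coproduct `G.obj X` by the inverses of the `η (c i)`.
-/

open CategoryTheory Category Limits

universe w v₁ u₁ v₂ u₂

/-- The canonical morphism from a coproduct to the corresponding product in a category
with zero morphisms: its composite `c i → ∐ c → ∏ c → c j` is the identity when
`i = j` and zero otherwise. -/
noncomputable def coproductToProduct {A : Type u₁} [Category.{v₁} A] [HasZeroMorphisms A]
    {I : Type w} (c : I → A) [HasCoproduct c] [HasProduct c] : (∐ c) ⟶ (∏ᶜ c) :=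
  Pi.lift fun i => Sigma.desc fun j => by
    classical exact if h : j = i then eqToHom (congrArg c h) else 0

section

variable {A : Type u₁} [Category.{v₁} A] {B : Type u₂} [Category.{v₂} B]

lemma sigmaComparison_jointly_epi (F : A ⥤ B) {I : Type w} (c : I → A) [HasCoproduct c]
    [HasCoproduct fun i => F.obj (c i)] [IsIso (sigmaComparison F c)] {X : A} (e : X ≅ ∐ c)
    {Z : B} (g h : F.obj X ⟶ Z)
    (w : ∀ i, F.map (Sigma.ι c i ≫ e.inv) ≫ g = F.map (Sigma.ι c i ≫ e.inv) ≫ h) : g = h := by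
  rw [← cancel_epi (F.map e.inv), ← cancel_epi (sigmaComparison F c)]
  refine Sigma.hom_ext _ _ fun i => ?_
  simpa using w i

lemma sigmaComparison_exists_desc (F : A ⥤ B) {I : Type w} (c : I → A) [HasCoproduct c]
    [HasCoproduct fun i => F.obj (c i)] [IsIso (sigmaComparison F c)] {X : A} (e : X ≅ ∐ c)
    {Z : B} (g : ∀ i, F.obj (c i) ⟶ Z) :
    ∃ h : F.obj X ⟶ Z, ∀ i, F.map (Sigma.ι c i ≫ e.inv) ≫ h = g i := by
  refine ⟨F.map e.hom ≫ inv (sigmaComparison F c) ≫ Sigma.desc g, fun i => ?_⟩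
  rw [← Functor.map_comp_assoc, assoc, e.inv_hom_id, comp_id, ← ι_comp_sigmaComparison]
  simp

lemma piComparison_jointly_mono (G : A ⥤ B) {I : Type w} (c : I → A) [HasProduct c]
    [HasProduct fun i => G.obj (c i)] [IsIso (piComparison G c)] {X : A} (e : X ≅ ∏ᶜ c)
    {Z : B} (g h : Z ⟶ G.obj X)
    (w : ∀ i, g ≫ G.map (e.hom ≫ Pi.π c i) = h ≫ G.map (e.hom ≫ Pi.π c i)) : g = h := by
  rw [← cancel_mono (G.map e.hom), ← cancel_mono (piComparison G c)]
  refine Pi.hom_ext _ _ fun i => ?_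
  simpa using w i

end

/-- Lemma 6.7: let `F, G : A ⥤ B` be additive functors between
additive categories, `C` a full subcategory of `A` (given by its class of objects), and
suppose that every object `X` of `A` admits a special isomorphism `ξ_X : X ≅ ∐ᵢ Cᵢ` with
respect to `(C; F, G)` (all `Cᵢ ∈ C`; (S1) `∐ᵢ Cᵢ` and `∏ᵢ Cᵢ` exist in `A` and the
canonical morphism `∐ᵢ Cᵢ → ∏ᵢ Cᵢ` is invertible; (S2) `∐ᵢ F(Cᵢ)` and `∐ᵢ G(Cᵢ)` exist
in `B` and the canonical comparison morphisms `∐ᵢ F(Cᵢ) → F(∐ᵢ Cᵢ)` and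
`∐ᵢ G(Cᵢ) → G(∐ᵢ Cᵢ)` are invertible; (S3) `∏ᵢ F(Cᵢ)` and `∏ᵢ G(Cᵢ)` exist in `B` and
the canonical comparison morphisms `F(∏ᵢ Cᵢ) → ∏ᵢ F(Cᵢ)` and `G(∏ᵢ Cᵢ) → ∏ᵢ G(Cᵢ)` are
invertible).  Then every natural transformation `η : F|_C → G|_C` extends to a unique
natural transformation `η' : F → G`; moreover if `η` is a natural isomorphism then so is
any such extension. -/
theorem natTrans_extend_unique_of_special_isos
    {A : Type u₁} [Category.{v₁} A] [Preadditive A] [HasZeroObject A]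
    [HasBinaryBiproducts A]
    {B : Type u₂} [Category.{v₂} B] [Preadditive B] [HasZeroObject B]
    [HasBinaryBiproducts B]
    (F G : A ⥤ B) [F.Additive] [G.Additive]
    (C : Set A)
    (hspec : ∀ X : A, ∃ (I : Type w) (c : I → A), (∀ i, c i ∈ C) ∧
      ∃ (h₁ : HasCoproduct c) (h₂ : HasProduct c)
        (h₃ : HasCoproduct fun i => F.obj (c i)) (h₄ : HasCoproduct fun i => G.obj (c i))
        (h₅ : HasProduct fun i => F.obj (c i)) (h₆ : HasProduct fun i => G.obj (c i)),
        Nonempty (X ≅ ∐ c) ∧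
        IsIso (coproductToProduct c) ∧
        IsIso (sigmaComparison F c) ∧ IsIso (sigmaComparison G c) ∧
        IsIso (piComparison F c) ∧ IsIso (piComparison G c))
    (η : ∀ X : A, X ∈ C → (F.obj X ⟶ G.obj X))
    (hη : ∀ (X Y : A) (hX : X ∈ C) (hY : Y ∈ C) (f : X ⟶ Y),
      F.map f ≫ η Y hY = η X hX ≫ G.map f) :
    (∃! η' : F ⟶ G, ∀ (X : A) (hX : X ∈ C), η'.app X = η X hX) ∧
    (∀ η' : F ⟶ G, (∀ (X : A) (hX : X ∈ C), η'.app X = η X hX) →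
      (∀ (X : A) (hX : X ∈ C), IsIso (η X hX)) → IsIso η') := by
  have key : ∀ X : A, ∃ (I : Type w) (c : I → A) (ι : ∀ i, c i ⟶ X) (π : ∀ i, X ⟶ c i),
      (∀ i, c i ∈ C) ∧
      (∀ (Z : B) (g h : F.obj X ⟶ Z), (∀ i, F.map (ι i) ≫ g = F.map (ι i) ≫ h) → g = h) ∧
      (∀ (Z : B) (g h : G.obj X ⟶ Z), (∀ i, G.map (ι i) ≫ g = G.map (ι i) ≫ h) → g = h) ∧
      (∀ (Z : B) (g : ∀ i, F.obj (c i) ⟶ Z), ∃ h, ∀ i, F.map (ι i) ≫ h = g i) ∧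
      (∀ (Z : B) (g : ∀ i, G.obj (c i) ⟶ Z), ∃ h, ∀ i, G.map (ι i) ≫ h = g i) ∧
      (∀ (Z : B) (g h : Z ⟶ G.obj X), (∀ i, g ≫ G.map (π i) = h ≫ G.map (π i)) → g = h) := by
    intro X
    obtain ⟨I, c, hc, _, _, _, _, _, _, ⟨e⟩, _, _, _, _, _⟩ := hspec X
    let e' : X ≅ ∏ᶜ c := e ≪≫ asIso (coproductToProduct c)
    exact ⟨I, c, fun i => Sigma.ι c i ≫ e.inv, fun i => e'.hom ≫ Pi.π c i, hc,
      fun Z => sigmaComparison_jointly_epi F c e, fun Z => sigmaComparison_jointly_epi G c e,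
      fun Z => sigmaComparison_exists_desc F c e, fun Z => sigmaComparison_exists_desc G c e,
      fun Z => piComparison_jointly_mono G c e'⟩
  choose I c ι π hc epiF epiG descF descG monoG using key
  choose t ht using fun X => descF X (G.obj X) fun i => η (c X i) (hc X i) ≫ G.map (ι X i)
  have ht' : ∀ X j, t X ≫ G.map (π X j) = F.map (π X j) ≫ η (c X j) (hc X j) := by
    intro X j
    refine epiF X _ _ _ fun i => ?_
    rw [← assoc, ht, ← Functor.map_comp_assoc, hη _ _ (hc X i) (hc X j), Functor.map_comp, assoc]
  refine ⟨⟨⟨t, ?_⟩, ?_, ?_⟩, ?_⟩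
  · intro X Y f
    refine epiF X _ _ _ fun i => monoG Y _ _ _ fun j => ?_
    have h := hη _ _ (hc X i) (hc Y j) (ι X i ≫ f ≫ π Y j)
    simp only [Functor.map_comp, assoc] at h
    simp only [assoc, ht', h]
    rw [← assoc (F.map (ι X i)), ht, assoc]
  · intro X hX
    refine epiF X _ _ _ fun i => ?_
    rw [hη _ _ (hc X i) hX]
    exact ht X i
  · intro η' h'
    ext X
    refine epiF X _ _ _ fun i => ?_
    rw [η'.naturality, h' _ (hc X i)]
    exact (ht X i).symm
  · intro η' h' hiso
    have : ∀ X, IsIso (η'.app X) := by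
      intro X
      have hi : ∀ i, IsIso (η'.app (c X i)) := fun i => by
        rw [h' _ (hc X i)]
        exact hiso _ (hc X i)
      obtain ⟨s, hs⟩ := descG X (F.obj X) fun i => inv (η'.app (c X i)) ≫ F.map (ι X i)
      refine ⟨s, epiF X _ _ _ fun i => ?_, epiG X _ _ _ fun i => ?_⟩
      · rw [← assoc, η'.naturality, assoc, hs, IsIso.hom_inv_id_assoc, comp_id]
      · rw [← assoc, hs, assoc, η'.naturality, IsIso.inv_hom_id_assoc, comp_id]
    exact NatIso.isIso_of_isIso_app η'
end
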